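/- arXiv:1410.4118 — 2 statements merged into one kernel-verified Lean document; each statement's English description precedes it below -/
import Mathlib

section
/- Every graph G with no odd hole satisfies χ(G) ≤ 2^(2^(ω(G)+2)) / (48·(ω(G)+2)). -/
open SimpleGraph

universe u

variable {V : Type u}

/-- The independence (stability) number of a graph. -/
noncomputable def indepNum (G : SimpleGraph V) : ℕ :=
  sSup {n | ∃ s : Finset V, s.card = n ∧ ∀ x ∈ s, ∀ y ∈ s, x ≠ y → ¬ G.Adj x y}

/-- A walk is induced: any edge of `G` between vertices of the walk is an edge of the walk. -/
def IsInducedWalk (G : SimpleGraph V) {u v : V} (p : G.Walk u v) : Prop :=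
  ∀ x ∈ p.support, ∀ y ∈ p.support, G.Adj x y → p.toSubgraph.Adj x y

/-- An induced path. -/
def IsInducedPath (G : SimpleGraph V) {u v : V} (p : G.Walk u v) : Prop :=
  p.IsPath ∧ IsInducedWalk G p

/-- An odd hole: an induced cycle of odd length at least 5. -/
def HasOddHole (G : SimpleGraph V) : Prop :=
  ∃ (v : V) (p : G.Walk v v), p.IsCycle ∧ IsInducedWalk G p ∧ Odd p.length ∧ 5 ≤ p.length

/-- A cograph: no induced path on four vertices. -/
def IsCograph (G : SimpleGraph V) : Prop :=
  ¬ ∃ a b c d : V, a ≠ c ∧ a ≠ d ∧ b ≠ d ∧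
    G.Adj a b ∧ G.Adj b c ∧ G.Adj c d ∧ ¬ G.Adj a c ∧ ¬ G.Adj a d ∧ ¬ G.Adj b d

/-- A levelling `(L 0, …, L k)` in `G`. -/
def IsLevelling (G : SimpleGraph V) (k : ℕ) (L : ℕ → Set V) : Prop :=
  (∀ i j, i ≤ k → j ≤ k → i ≠ j → Disjoint (L i) (L j)) ∧
  (∃ x, L 0 = {x}) ∧
  (∀ i, 1 ≤ i → i ≤ k → ∀ v ∈ L i,
     (∃ u ∈ L (i - 1), G.Adj u v) ∧ (∀ h, h + 1 < i → ∀ u ∈ L h, ¬ G.Adj u v))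

/-- The interior (internal vertices) of a walk is contained in `S`. -/
def InteriorIn (G : SimpleGraph V) {u v : V} (p : G.Walk u v) (S : Set V) : Prop :=
  ∀ x ∈ p.support, x ≠ u → x ≠ v → x ∈ S

/-- The union `L 0 ∪ ⋯ ∪ L (k-1)`. -/
def lowerLevels (L : ℕ → Set V) (k : ℕ) : Set V := ⋃ i ∈ Finset.range k, L i

/-- There is an odd induced path between `u` and `v` with interior in the lower levels. -/
def OddConn (G : SimpleGraph V) (L : ℕ → Set V) (k : ℕ) (u v : V) : Prop :=
  u ≠ v ∧ ∃ p : G.Walk u v, IsInducedPath G p ∧ Odd p.length ∧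
    InteriorIn G p (lowerLevels L k)

/-- `w ∈ L (i+1)` is a dependent of `u ∈ L i`: `u` is its only parent. -/
def IsDependent (G : SimpleGraph V) (L : ℕ → Set V) (i : ℕ) (u w : V) : Prop :=
  w ∈ L (i + 1) ∧ G.Adj u w ∧ ∀ x ∈ L i, G.Adj x w → x = u

/-- The sequence form of having no odd hole. -/
def OddHoleFree (G : SimpleGraph V) : Prop :=
  ∀ (N : ℕ) (f : ℕ → V), Odd N → 5 ≤ N →
    ¬ ∀ i j, i < j → j < N →
      f i ≠ f j ∧ (G.Adj (f i) (f j) ↔ j = i + 1 ∨ (i = 0 ∧ j + 1 = N))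

theorem exists_walk_of_adj_succ (G : SimpleGraph V) (f : ℕ → V) (k : ℕ)
    (h : ∀ i < k, G.Adj (f i) (f (i + 1))) :
    ∃ p : G.Walk (f 0) (f k), p.support = (List.range (k + 1)).map f ∧
      p.edges = (List.range k).map (fun i => s(f i, f (i + 1))) := by
  induction k with
  | zero => exact ⟨Walk.nil, by simp, by simp⟩
  | succ k ih =>
    obtain ⟨p, hs, he⟩ := ih (fun i hi => h i (by omega))
    refine ⟨p.concat (h k (by omega)), ?_, ?_⟩
    · rw [Walk.support_concat, hs, List.range_succ (n := k + 1)]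
      simp
    · rw [Walk.edges_concat, he, List.range_succ (n := k)]
      simp

theorem oddHoleFree_of_not_hasOddHole {G : SimpleGraph V} (h : ¬ HasOddHole G) :
    OddHoleFree G := by
  intro N f hodd h5 hf
  apply h
  obtain ⟨k, rfl⟩ : ∃ k, N = k + 1 := ⟨N - 1, by omega⟩
  have hadj : ∀ i < k, G.Adj (f i) (f (i + 1)) := fun i hi =>
    (hf i (i + 1) (by omega) (by omega)).2.2 (Or.inl rfl)
  obtain ⟨p, hs, he⟩ := exists_walk_of_adj_succ G f k hadj
  have hclose : G.Adj (f k) (f 0) :=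
    ((hf 0 k (by omega) (by omega)).2.2 (Or.inr ⟨rfl, rfl⟩)).symm
  have hinj : ∀ i j, i ≤ k → j ≤ k → f i = f j → i = j := by
    intro i j hi hj hij
    rcases lt_trichotomy i j with hlt | rfl | hlt
    · exact absurd hij (hf i j hlt (by omega)).1
    · rfl
    · exact absurd hij.symm (hf j i hlt (by omega)).1
  have hpath : p.IsPath := by
    rw [Walk.isPath_def, hs]
    refine List.Nodup.map_on ?_ List.nodup_range
    intro i hi j hj hij
    simp only [List.mem_range] at hi hj
    exact hinj i j (by omega) (by omega) hij
  have hlen : p.length = k := by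
    have := congrArg List.length he
    simpa using this
  refine ⟨f k, Walk.cons hclose p, ?_, ?_, ?_, ?_⟩
  · rw [Walk.cons_isCycle_iff]
    refine ⟨hpath, ?_⟩
    rw [he]
    intro hm
    simp only [List.mem_map, List.mem_range, Sym2.eq_iff] at hm
    obtain ⟨i, hi, ⟨h1, h2⟩ | ⟨h1, h2⟩⟩ := hm
    · have := hinj i k (by omega) (by omega) h1
      omega
    · have := hinj i 0 (by omega) (by omega) h1
      have := hinj (i + 1) k (by omega) (by omega) h2
      omega
  · intro x hx y hy hxy
    have hmem : ∀ z, z ∈ (Walk.cons hclose p).support → ∃ i ≤ k, z = f i := by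
      intro z hz
      rw [Walk.support_cons, List.mem_cons, hs, List.mem_map] at hz
      rcases hz with rfl | ⟨i, hi, rfl⟩
      · exact ⟨k, le_rfl, rfl⟩
      · exact ⟨i, by simpa [Nat.lt_succ_iff] using hi, rfl⟩
    have key : ∀ i j, i < j → j ≤ k → G.Adj (f i) (f j) →
        (Walk.cons hclose p).toSubgraph.Adj (f i) (f j) := by
      intro i j hij hj ha
      rw [← Subgraph.mem_edgeSet, Walk.mem_edges_toSubgraph, Walk.edges_cons, List.mem_cons, he]
      rcases (hf i j hij (by omega)).2.1 ha with rfl | ⟨rfl, hjk⟩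
      · right
        exact List.mem_map.2 ⟨i, by simp; omega, rfl⟩
      · left
        obtain rfl : j = k := by omega
        exact Sym2.eq_swap
    obtain ⟨i, hi, rfl⟩ := hmem x hx
    obtain ⟨j, hj, rfl⟩ := hmem y hy
    rcases lt_trichotomy i j with hlt | rfl | hlt
    · exact key i j hlt hj hxy
    · exact absurd hxy (G.irrefl)
    · exact (key j i hlt hi hxy.symm).symm
  · simpa [hlen] using hodd
  · simpa [hlen] using h5

/-- There is an induced path of length `l` from `u` to `v` with interior in `S`. -/
def IndPath (G : SimpleGraph V) (S : Set V) (l : ℕ) (u v : V) : Prop :=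
  ∃ f : ℕ → V, f 0 = u ∧ f l = v ∧
    (∀ i j, i < j → j ≤ l → f i ≠ f j ∧ (G.Adj (f i) (f j) ↔ j = i + 1)) ∧
    ∀ i, 0 < i → i < l → f i ∈ S

namespace IndPath

variable {G : SimpleGraph V} {S T : Set V} {l m : ℕ} {u v x : V}

theorem mono (hST : S ⊆ T) (h : IndPath G S l u v) : IndPath G T l u v := by
  obtain ⟨f, h0, hl, hf, hS⟩ := h
  exact ⟨f, h0, hl, hf, fun i hi hil => hST (hS i hi hil)⟩

theorem symm (h : IndPath G S l u v) : IndPath G S l v u := by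
  obtain ⟨f, h0, hl, hf, hS⟩ := h
  refine ⟨fun i => f (l - i), by simpa using hl, by simpa using h0, ?_, ?_⟩
  · intro i j hij hj
    have h := hf (l - j) (l - i) (by omega) (by omega)
    refine ⟨h.1.symm, ?_⟩
    rw [G.adj_comm, h.2]
    omega
  · intro i hi hil
    exact hS _ (by omega) (by omega)

theorem of_adj (h : G.Adj u v) : IndPath G S 1 u v := by
  refine ⟨fun i => if i = 0 then u else v, by simp, by simp, ?_, ?_⟩
  · intro i j hij hj
    obtain ⟨rfl, rfl⟩ : i = 0 ∧ j = 1 := by omega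
    simp [h, h.ne]
  · intro i hi hil
    omega

theorem cons (h : IndPath G S l x v) (hST : S ⊆ T) (hxT : x ∈ T) (hux : G.Adj u x)
    (huv : u ≠ v) (hnuv : ¬ G.Adj u v) (hu : ∀ p ∈ S, u ≠ p ∧ ¬ G.Adj u p) :
    IndPath G T (l + 1) u v := by
  obtain ⟨f, h0, hl, hf, hS⟩ := h
  refine ⟨fun i => if i = 0 then u else f (i - 1), by simp, by simpa using hl, ?_, ?_⟩
  · intro i j hij hj
    have hj0 : j ≠ 0 := by omega
    by_cases hi : i = 0
    · subst hi
      simp only [if_true, hj0, if_false]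
      by_cases hj1 : j = 1
      · subst hj1
        simp [h0, hux, hux.ne]
      · by_cases hjl : j - 1 = l
        · rw [hjl, hl]
          simp only [huv, hnuv, ne_eq, not_false_eq_true, true_and, false_iff]
          omega
        · have := hu _ (hS (j - 1) (by omega) (by omega))
          simp only [this.1, this.2, ne_eq, not_false_eq_true, true_and, false_iff]
          omega
    · simp only [hi, hj0, if_false]
      have h := hf (i - 1) (j - 1) (by omega) (by omega)
      refine ⟨h.1, h.2.trans ?_⟩
      omega
  · intro i hi hil
    have hi0 : i ≠ 0 := by omega
    simp only [hi0, if_false]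
    by_cases hi1 : i = 1
    · subst hi1
      simpa [h0] using hxT
    · exact hST (hS _ (by omega) (by omega))

theorem two (hux : G.Adj u x) (hxv : G.Adj x v) (huv : u ≠ v) (hnuv : ¬ G.Adj u v)
    (hx : x ∈ S) : IndPath G S 2 u v :=
  (of_adj (S := ∅) hxv).cons (Set.empty_subset _) hx hux huv hnuv (by simp)

theorem three {y : V} (hux : G.Adj u x) (hxy : G.Adj x y) (hyv : G.Adj y v) (huv : u ≠ v)
    (hnuv : ¬ G.Adj u v) (huy : ¬ G.Adj u y) (hxv : ¬ G.Adj x v)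
    (hx : x ∈ S) (hy : y ∈ S) : IndPath G S 3 u v := by
  refine (two (S := {y}) hxy hyv ?_ hxv rfl).cons (by simpa using hy) hx hux huv hnuv ?_
  · rintro rfl
    exact hnuv hux
  · rintro p rfl
    refine ⟨?_, huy⟩
    rintro rfl
    exact hnuv hyv

theorem four {y z : V} (hux : G.Adj u x) (hxy : G.Adj x y) (hyz : G.Adj y z) (hzv : G.Adj z v)
    (huv : u ≠ v) (hnuv : ¬ G.Adj u v) (huy : ¬ G.Adj u y) (huz : ¬ G.Adj u z)
    (hxz : ¬ G.Adj x z) (hxv : ¬ G.Adj x v) (hyv : ¬ G.Adj y v)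
    (hx : x ∈ S) (hy : y ∈ S) (hz : z ∈ S) : IndPath G S 4 u v := by
  refine (three (S := {y, z}) hxy hyz hzv ?_ hxv hxz hyv (by simp) (by simp)).cons
    (by simp [Set.insert_subset_iff, hy, hz]) hx hux huv hnuv ?_
  · rintro rfl
    exact hnuv hux
  · rintro p (rfl | rfl)
    · refine ⟨?_, huy⟩
      rintro rfl
      exact huz hyz
    · refine ⟨?_, huz⟩
      rintro rfl
      exact hnuv hzv

/-- Two induced paths with the same nonadjacent ends and anticomplete interiors have lengths of
the same parity. -/
theorem even_add (hG : OddHoleFree G) (hP : IndPath G S l u v) (hQ : IndPath G T m u v)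
    (huv : u ≠ v) (hnuv : ¬ G.Adj u v)
    (hST : ∀ p ∈ S, p ≠ u → p ≠ v → ∀ q ∈ T, p ≠ q ∧ ¬ G.Adj p q) : Even (l + m) := by
  obtain ⟨f, hf0, hfl, hf, hfS⟩ := hP
  obtain ⟨g, hg0, hgm, hg, hgT⟩ := hQ
  have two_le : ∀ (k : ℕ) (e : ℕ → V), e 0 = u → e k = v →
      (∀ i j, i < j → j ≤ k → e i ≠ e j ∧ (G.Adj (e i) (e j) ↔ j = i + 1)) → 2 ≤ k := by
    intro k e h0 hk he
    by_contra hlt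
    have : k = 0 ∨ k = 1 := by omega
    rcases this with rfl | rfl
    · exact huv (h0.symm.trans hk)
    · apply hnuv
      rw [← h0, ← hk]
      exact (he 0 1 (by omega) le_rfl).2.2 rfl
  have hl2 := two_le l f hf0 hfl hf
  have hm2 := two_le m g hg0 hgm hg
  by_contra hodd
  rw [Nat.not_even_iff_odd] at hodd
  have h5 : 5 ≤ l + m := by
    rcases hodd with ⟨k, hk⟩
    omega
  refine hG (l + m) (fun i => if i ≤ l then f i else g (l + m - i)) hodd h5 ?_
  intro i j hij hj
  by_cases hjl : j ≤ l
  · have hil : i ≤ l := by omega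
    simp only [hjl, hil, if_true]
    have h := hf i j hij hjl
    refine ⟨h.1, h.2.trans ?_⟩
    omega
  · simp only [hjl, if_false]
    by_cases hil : i ≤ l
    · simp only [hil, if_true]
      by_cases hi0 : i = 0
      · subst hi0
        rw [hf0, ← hg0]
        have h := hg 0 (l + m - j) (by omega) (by omega)
        refine ⟨h.1, h.2.trans ?_⟩
        omega
      · by_cases hil' : i = l
        · subst hil'
          rw [hfl, ← hgm, G.adj_comm]
          have h := hg (i + m - j) m (by omega) le_rfl
          refine ⟨h.1.symm, h.2.trans ?_⟩
          omega
        · have hp := hfS i (by omega) (by omega)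
          have h := hST _ hp
            (by rw [← hf0]; exact (hf 0 i (by omega) hil).1.symm)
            (by rw [← hfl]; exact (hf i l (by omega) le_rfl).1)
            _ (hgT (l + m - j) (by omega) (by omega))
          refine ⟨h.1, ?_⟩
          simp only [h.2, false_iff]
          omega
    · simp only [hil, if_false]
      have h := hg (l + m - j) (l + m - i) (by omega) (by omega)
      rw [G.adj_comm]
      refine ⟨h.1.symm, h.2.trans ?_⟩
      omega

end IndPath

/-- A relation has no induced path on four points. -/
def NoInducedP4 {X : Type*} (H : X → X → Prop) : Prop :=
  ∀ a b c d, H a b → H b c → H c d → ¬ H a c → ¬ H b d → ¬ H a d → False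

/-- The vertices of the graph `R` carry sets of points which are completely `H`-related along
edges of `R`, and unrelated, at least in part, across induced two-edge paths of `R`. -/
structure ParityRep {X Y : Type*} (R : SimpleGraph Y) (N : Y → Set X) (H : X → X → Prop) :
    Prop where
  nonempty : ∀ {y y'}, R.Adj y y' → (N y).Nonempty
  symm : ∀ {x x'}, H x x' → H x' x
  irrefl : ∀ x, ¬ H x x
  noP4 : NoInducedP4 H
  odd : ∀ {y y'}, R.Adj y y' → ∀ x ∈ N y, ∀ x' ∈ N y', H x x'
  even : ∀ {a b c}, R.Adj a b → R.Adj b c → a ≠ c → ¬ R.Adj a c →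
    ∀ x ∈ N a, ∃ x' ∈ N c, ¬ H x x'

/-- A levelling function of a graph, as given by the distance from a root in each component. -/
structure IsLevelFun {Y : Type*} (R : SimpleGraph Y) (lev : Y → ℕ) : Prop where
  le_succ : ∀ {y y'}, R.Adj y y' → lev y' ≤ lev y + 1
  parent : ∀ {y j}, lev y = j + 1 → ∃ p, R.Adj p y ∧ lev p = j
  root_unique : ∀ {y y'}, R.Reachable y y' → lev y = 0 → lev y' = 0 → y = y'

theorem exists_adj_dist_eq {Y : Type*} {R : SimpleGraph Y} {r y : Y} {j : ℕ}
    (hr : R.Reachable r y) (hj : R.dist r y = j + 1) : ∃ q, R.Adj q y ∧ R.dist r q = j := by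
  obtain ⟨p, hp⟩ := hr.symm.exists_walk_length_eq_dist
  rw [dist_comm, hj] at hp
  cases p with
  | nil => simp at hp
  | @cons _ q _ h p =>
    rw [Walk.length_cons] at hp
    refine ⟨q, h.symm, ?_⟩
    rw [dist_comm]
    apply le_antisymm
    · have := dist_le p
      omega
    · obtain ⟨w, hw⟩ := p.reachable.exists_walk_length_eq_dist
      have := dist_le (Walk.cons h w)
      rw [dist_comm, hj, Walk.length_cons, hw] at this
      omega

theorem exists_isLevelFun {Y : Type*} (R : SimpleGraph Y) : ∃ lev, IsLevelFun R lev := by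
  let root : Y → Y := fun y => (R.connectedComponentMk y).out
  have hroot : ∀ y, R.Reachable (root y) y := fun y =>
    ConnectedComponent.exact (R.connectedComponentMk y).out_eq
  have heq : ∀ y y', R.Reachable y y' → root y = root y' := fun y y' h => by
    simp only [root, ConnectedComponent.sound h]
  refine ⟨fun y => R.dist (root y) y, ?_, ?_, ?_⟩
  · intro y y' h
    rw [← heq y y' h.reachable]
    obtain ⟨p, hp⟩ := (hroot y).exists_walk_length_eq_dist
    have := dist_le (p.concat h)
    rw [Walk.length_concat, hp] at this
    exact this
  · intro y j hj
    obtain ⟨q, hq, hqj⟩ := exists_adj_dist_eq (hroot y) hj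
    exact ⟨q, hq, by rw [← heq y q hq.symm.reachable, hqj]⟩
  · intro y y' h h0 h0'
    have e := (hroot y).dist_eq_zero_iff.1 h0
    have e' := (hroot y').dist_eq_zero_iff.1 h0'
    rw [← e, ← e', heq y y' h]

namespace IsLevelFun

variable {Y : Type*} {R : SimpleGraph Y} {lev : Y → ℕ}

theorem exists_descent (hl : IsLevelFun R lev) (j : ℕ) : ∀ y, lev y = j →
    ∃ a : ℕ → Y, a j = y ∧ (∀ i < j, R.Adj (a i) (a (i + 1))) ∧ (∀ i ≤ j, lev (a i) = i) ∧
      R.Reachable (a 0) y := by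
  induction j with
  | zero =>
    intro y hy
    exact ⟨fun _ => y, rfl, by simp, by simpa using hy, Reachable.refl y⟩
  | succ j ih =>
    intro y hy
    obtain ⟨p, hp, hpj⟩ := hl.parent hy
    obtain ⟨a, ha, hadj, hlev, hr⟩ := ih p hpj
    refine ⟨fun i => if i ≤ j then a i else y, by simp, ?_, ?_, ?_⟩
    · intro i hi
      by_cases hij : i = j
      · subst hij
        simpa [ha] using hp
      · have h1 : i ≤ j := by omega
        have h2 : i + 1 ≤ j := by omega
        simpa [h1, h2] using hadj i (by omega)
    · intro i hi
      by_cases hij : i ≤ j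
      · simpa [hij] using hlev i hij
      · simp only [hij, if_false]
        omega
    · simpa using hr.trans hp.reachable

theorem exists_descent_through (hl : IsLevelFun R lev) {j : ℕ} {y p : Y} (hy : lev y = j + 1)
    (hp : lev p = j) (hpy : R.Adj p y) :
    ∃ a : ℕ → Y, a j = p ∧ a (j + 1) = y ∧ (∀ i < j + 1, R.Adj (a i) (a (i + 1))) ∧
      (∀ i ≤ j + 1, lev (a i) = i) ∧ R.Reachable (a 0) y := by
  obtain ⟨a, ha, hadj, hlev, hr⟩ := hl.exists_descent j p hp
  refine ⟨fun i => if i ≤ j then a i else y, by simp [ha], by simp, ?_, ?_, ?_⟩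
  · intro i hi
    by_cases hij : i = j
    · subst hij
      simpa [ha] using hpy
    · have h1 : i ≤ j := by omega
      have h2 : i + 1 ≤ j := by omega
      simpa [h1, h2] using hadj i (by omega)
  · intro i hi
    by_cases hij : i ≤ j
    · simpa [hij] using hlev i hij
    · simp only [hij, if_false]
      omega
  · simpa using hr.trans hpy.reachable

theorem not_adj (hl : IsLevelFun R lev) {y y' : Y} (h : lev y + 2 ≤ lev y') :
    y ≠ y' ∧ ¬ R.Adj y y' := by
  refine ⟨?_, fun ha => ?_⟩
  · rintro rfl
    omega
  · have := hl.le_succ ha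
    omega

end IsLevelFun

namespace ParityRep

variable {X Y : Type*} {R : SimpleGraph Y} {N : Y → Set X} {H : X → X → Prop} {lev : Y → ℕ}

theorem odd_of_gap (h : ParityRep R N H) (t : ℕ) : ∀ f : ℕ → Y, Odd t →
    (∀ i < t, R.Adj (f i) (f (i + 1))) →
    (∀ i, i + 2 ≤ t → f i ≠ f (i + 2) ∧ ¬ R.Adj (f i) (f (i + 2))) →
    ∀ x ∈ N (f 0), ∀ x' ∈ N (f t), H x x' := by
  induction t using Nat.strong_induction_on with
  | _ t ih =>
    intro f hodd hadj hfar x hx x' hx'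
    obtain ⟨k, rfl⟩ := hodd
    rcases k with _ | k
    · exact h.odd (hadj 0 (by omega)) x hx x' hx'
    · by_contra hn
      obtain ⟨x₂, hx₂, hn₂⟩ := h.even (hadj 0 (by omega)) (hadj 1 (by omega))
        (hfar 0 (by omega)).1 (hfar 0 (by omega)).2 x hx
      have hlast := hfar (2 * k + 1) (by omega)
      obtain ⟨x₁, hx₁, hn₁⟩ := h.even (hadj (2 * k + 2) (by omega)).symm
        (hadj (2 * k + 1) (by omega)).symm hlast.1.symm (fun h => hlast.2 h.symm) x' hx'
      have h1 : H x x₁ := ih (2 * k + 1) (by omega) f ⟨k, rfl⟩ (fun i hi => hadj i (by omega))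
        (fun i hi => hfar i (by omega)) x hx x₁ hx₁
      have h3 : H x₂ x' := by
        refine ih (2 * k + 1) (by omega) (fun i => f (i + 2)) ⟨k, rfl⟩
          (fun i hi => hadj (i + 2) (by omega)) (fun i hi => hfar (i + 2) (by omega)) x₂ hx₂ x' ?_
        exact hx'
      have h2 : H x₁ x₂ := by
        rcases k with _ | k
        · exact h.odd (hadj 1 (by omega)) x₁ hx₁ x₂ hx₂
        · apply h.symm
          refine ih (2 * k + 1) (by omega) (fun i => f (i + 2)) ⟨k, rfl⟩
            (fun i hi => hadj (i + 2) (by omega)) (fun i hi => hfar (i + 2) (by omega))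
            x₂ hx₂ x₁ ?_
          exact hx₁
      exact h.noP4 x x₁ x₂ x' h1 h2 h3 hn₂ (fun hh => hn₁ (h.symm hh)) hn

theorem odd_of_three (h : ParityRep R N H) {a b c d : Y} (hab : R.Adj a b) (hbc : R.Adj b c)
    (hcd : R.Adj c d) (hac : a ≠ c) (hnac : ¬ R.Adj a c) (hbd : b ≠ d) (hnbd : ¬ R.Adj b d) :
    ∀ x ∈ N a, ∀ x' ∈ N d, H x x' := by
  refine h.odd_of_gap 3 (fun i => if i = 0 then a else if i = 1 then b else if i = 2 then c else d)
    ⟨1, rfl⟩ ?_ ?_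
  · intro i hi
    interval_cases i <;> simpa
  · intro i hi
    have : i = 0 ∨ i = 1 := by omega
    rcases this with rfl | rfl <;> simp [*]

theorem parent_adj (h : ParityRep R N H) (hl : IsLevelFun R lev) (j : ℕ) :
    ∀ u v p, lev u = j + 1 → lev v = j + 1 → lev p = j → R.Adj u v → R.Adj p u → R.Adj p v := by
  induction j with
  | zero =>
    intro u v p hu hv hp huv hpu
    obtain ⟨q, hq, hq0⟩ := hl.parent hv
    rwa [hl.root_unique ((hpu.reachable.trans huv.reachable).trans hq.symm.reachable) hp hq0]
  | succ j ih =>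
    intro u v p hu hv hp huv hpu
    by_contra hpv
    have hpv' : p ≠ v := by
      rintro rfl
      omega
    obtain ⟨p', hp'v, hp'⟩ := hl.parent hv
    have hup' : u ≠ p' := by
      rintro rfl
      omega
    by_cases hp'u : R.Adj u p'
    · obtain ⟨g, hgp, hg⟩ := hl.parent hp
      have hgu := hl.not_adj (y := g) (y' := u) (by omega)
      have hgv := hl.not_adj (y := g) (y' := v) (by omega)
      by_cases hpp' : R.Adj p p'
      · have hgp' := ih p p' g hp hp' hg hpp' hgp
        obtain ⟨x, hx⟩ := h.nonempty hgp
        obtain ⟨x', hx', hn⟩ := h.even hgp' hp'v hgv.1 hgv.2 x hx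
        exact hn (h.odd_of_three hgp hpu huv hgu.1 hgu.2 hpv' hpv x hx x' hx')
      · obtain ⟨g', hg'p', hg'⟩ := hl.parent hp'
        have hg'u := hl.not_adj (y := g') (y' := u) (by omega)
        have hg'v := hl.not_adj (y := g') (y' := v) (by omega)
        have hne : p ≠ p' := by
          rintro rfl
          exact hpv hp'v
        obtain ⟨xp, hxp⟩ := h.nonempty hpu
        obtain ⟨xp', hxp', hn₁⟩ := h.even hpu hp'u hne hpp' xp hxp
        obtain ⟨xv, hxv, hn₂⟩ := h.even hpu huv hpv' hpv xp hxp
        obtain ⟨xg, hxg, hn₃⟩ := h.even hp'v.symm hg'p'.symm hg'v.1.symm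
          (fun hh => hg'v.2 hh.symm) xv hxv
        exact h.noP4 xp xg xp' xv
          (h.odd_of_three hpu hp'u hg'p'.symm hne hpp' hg'u.1.symm (fun hh => hg'u.2 hh.symm)
            xp hxp xg hxg)
          (h.odd hg'p' xg hxg xp' hxp') (h.odd hp'v xp' hxp' xv hxv) hn₁
          (fun hh => hn₃ (h.symm hh)) hn₂
    · obtain ⟨a, hap, hau, haadj, halev, har⟩ := hl.exists_descent_through hu hp hpu
      obtain ⟨b, hbp, hbv, hbadj, hblev, hbr⟩ := hl.exists_descent_through hv hp' hp'v
      have hab : a 0 = b 0 := hl.root_unique ((har.trans huv.reachable).trans hbr.symm)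
        (halev 0 (by omega)) (hblev 0 (by omega))
      obtain ⟨x, hx⟩ := h.nonempty (haadj 0 (by omega))
      refine h.irrefl x (h.odd_of_gap (2 * (j + 2) + 1)
        (fun i => if i ≤ j + 2 then a i else b (2 * (j + 2) + 1 - i)) ⟨j + 2, rfl⟩ ?_ ?_ x ?_ x ?_)
      · intro i hi
        rcases lt_trichotomy i (j + 2) with hlt | rfl | hlt
        · have h1 : i ≤ j + 2 := by omega
          have h2 : i + 1 ≤ j + 2 := by omega
          simpa only [h1, h2, if_true] using haadj i (by omega)
        · have e : 2 * (j + 2) + 1 - (j + 2 + 1) = j + 1 + 1 := by omega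
          simp only [le_refl, if_true, e, hbv]
          simpa [hau] using huv
        · have h1 : ¬ i ≤ j + 2 := by omega
          have h2 : ¬ i + 1 ≤ j + 2 := by omega
          have := hbadj (2 * (j + 2) + 1 - (i + 1)) (by omega)
          have e : 2 * (j + 2) + 1 - (i + 1) + 1 = 2 * (j + 2) + 1 - i := by omega
          simp only [h1, h2, if_false]
          rw [e] at this
          exact this.symm
      · intro i hi
        rcases lt_trichotomy i (j + 1) with hlt | rfl | hlt
        · have h1 : i ≤ j + 2 := by omega
          have h2 : i + 2 ≤ j + 2 := by omega
          simp only [h1, h2, if_true]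
          apply hl.not_adj
          rw [halev i (by omega), halev (i + 2) (by omega)]
        · have e : 2 * (j + 2) + 1 - (j + 1 + 2) = j + 1 + 1 := by omega
          simp only [show j + 1 ≤ j + 2 by omega, show ¬ j + 1 + 2 ≤ j + 2 by omega, if_true,
            if_false, e, hap, hbv]
          exact ⟨hpv', hpv⟩
        · by_cases hi2 : i = j + 2
          · subst hi2
            have e : 2 * (j + 2) + 1 - (j + 2 + 2) = j + 1 := by omega
            simp only [show ¬ j + 2 + 2 ≤ j + 2 by omega, le_refl, if_true,
              if_false, e, hau, hbp]
            exact ⟨hup', hp'u⟩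
          · have h1 : ¬ i ≤ j + 2 := by omega
            have h2 : ¬ i + 2 ≤ j + 2 := by omega
            simp only [h1, h2, if_false]
            have := hl.not_adj (y := b (2 * (j + 2) + 1 - (i + 2)))
              (y' := b (2 * (j + 2) + 1 - i))
              (by rw [hblev _ (by omega), hblev _ (by omega)]; omega)
            exact ⟨this.1.symm, fun hh => this.2 hh.symm⟩
      · simpa using hx
      · have h1 : ¬ 2 * (j + 2) + 1 ≤ j + 2 := by omega
        simpa only [h1, if_false, Nat.sub_self, ← hab] using hx

/-- The edges of `R` joining vertices of the same level. -/
def sameLevel (R : SimpleGraph Y) (lev : Y → ℕ) : SimpleGraph Y where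
  Adj a b := R.Adj a b ∧ lev a = lev b
  symm := ⟨fun _ _ h => ⟨h.1.symm, h.2.symm⟩⟩
  loopless := ⟨fun _ h => R.irrefl h.1⟩

theorem sameLevel_rep (h : ParityRep R N H) (lev : Y → ℕ) :
    ParityRep (sameLevel R lev) N H where
  nonempty hy := h.nonempty hy.1
  symm := h.symm
  irrefl := h.irrefl
  noP4 := h.noP4
  odd hy := h.odd hy.1
  even hab hbc hac hn := h.even hab.1 hbc.1 hac fun hh => hn ⟨hh, hab.2.trans hbc.2⟩

theorem sameLevel_cliqueFree (h : ParityRep R N H) (hl : IsLevelFun R lev) {m : ℕ}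
    (hR : R.CliqueFree (m + 3)) : (sameLevel R lev).CliqueFree (m + 2) := by
  classical
  intro s hs
  obtain ⟨u, hu, v, hv, huv⟩ := Finset.one_lt_card.1 (by rw [hs.card_eq]; omega)
  have huv' := hs.isClique hu hv huv
  rcases hj : lev u with _ | j
  · exact huv (hl.root_unique huv'.1.reachable hj (huv'.2 ▸ hj))
  · obtain ⟨p, hpu, hp⟩ := hl.parent hj
    have hall : ∀ w ∈ s, R.Adj p w := by
      intro w hw
      by_cases hwu : u = w
      · exact hwu ▸ hpu
      · have huw := hs.isClique hu hw hwu
        exact h.parent_adj hl j u w p hj (huw.2 ▸ hj) hp huw.1 hpu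
    refine hR (insert p s) (IsNClique.insert ⟨?_, hs.card_eq⟩ hall)
    exact fun a ha b hb hab => (hs.isClique ha hb hab).1

theorem colorable (m : ℕ) : ∀ {R : SimpleGraph Y}, ParityRep R N H → R.CliqueFree (m + 2) →
    R.Colorable (2 ^ m) := by
  induction m with
  | zero =>
    intro R _ hR
    refine ⟨Coloring.mk (fun _ => 0) fun {a b} hab => ?_⟩
    rw [cliqueFree_two] at hR
    simp [hR] at hab
  | succ m ih =>
    intro R h hR
    obtain ⟨lev, hl⟩ := exists_isLevelFun R
    obtain ⟨c⟩ := ih (h.sameLevel_rep lev) (h.sameLevel_cliqueFree hl hR)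
    have : R.Coloring (Fin 2 × Fin (2 ^ m)) := Coloring.mk
      (fun y => (⟨lev y % 2, by omega⟩, c y)) fun {a b} hab heq => by
        simp only [Prod.mk.injEq, Fin.mk.injEq] at heq
        by_cases hlab : lev a = lev b
        · exact c.valid (v := a) (w := b) ⟨hab, hlab⟩ heq.2
        · have h1 := hl.le_succ hab
          have h2 := hl.le_succ hab.symm
          omega
    have := this.colorable
    simpa [pow_succ, mul_comm] using this

end ParityRep

/-- `G` restricted to `S` has a proper colouring with `m` colours. -/
def ColOn (G : SimpleGraph V) (S : Set V) (m : ℕ) : Prop :=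
  ∃ c : V → ℕ, (∀ v ∈ S, c v < m) ∧ ∀ u ∈ S, ∀ v ∈ S, G.Adj u v → c u ≠ c v

/-- `S` contains no clique of size `w`. -/
def NoCliqueIn (G : SimpleGraph V) (S : Set V) (w : ℕ) : Prop :=
  ∀ s : Finset V, (∀ v ∈ s, v ∈ S) → ¬ G.IsNClique w s

/-- The spanning subgraph of `G` with the edges inside `S`. -/
def restrictTo (G : SimpleGraph V) (S : Set V) : SimpleGraph V where
  Adj a b := G.Adj a b ∧ a ∈ S ∧ b ∈ S
  symm := ⟨fun _ _ h => ⟨h.1.symm, h.2.2, h.2.1⟩⟩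
  loopless := ⟨fun _ h => G.irrefl h.1⟩

theorem restrictTo_le (G : SimpleGraph V) (S : Set V) : restrictTo G S ≤ G :=
  fun _ _ h => h.1

theorem restrictTo_mono (G : SimpleGraph V) {S T : Set V} (h : S ⊆ T) :
    restrictTo G S ≤ restrictTo G T :=
  fun _ _ hab => ⟨hab.1, h hab.2.1, h hab.2.2⟩

theorem NoCliqueIn.of_common_neighbor {G : SimpleGraph V} {S : Set V} {w : ℕ}
    (hG : G.CliqueFree (w + 1)) {x : V} (hx : ∀ v ∈ S, G.Adj x v) : NoCliqueIn G S w := by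
  classical
  intro s hs hc
  exact hG _ (hc.insert fun b hb => hx b (hs b hb))

namespace ColOn

variable {G : SimpleGraph V} {S T : Set V} {m q : ℕ}

theorem mono_num (h : ColOn G S m) (hmq : m ≤ q) : ColOn G S q := by
  obtain ⟨c, h1, h2⟩ := h
  exact ⟨c, fun v hv => (h1 v hv).trans_le hmq, h2⟩

theorem of_cover (T : ℕ → Set V) (hS : ∀ v ∈ S, ∃ j < m, v ∈ T j)
    (hT : ∀ j < m, ColOn G (T j) q) : ColOn G S (m * q) := by
  classical
  have hT' : ∀ j, ∃ c : V → ℕ, j < m → (∀ v ∈ T j, c v < q) ∧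
      ∀ u ∈ T j, ∀ v ∈ T j, G.Adj u v → c u ≠ c v := by
    intro j
    by_cases hj : j < m
    · obtain ⟨c, hc⟩ := hT j hj
      exact ⟨c, fun _ => hc⟩
    · exact ⟨fun _ => 0, fun h => absurd h hj⟩
  choose c hc using hT'
  have hS' : ∀ v, ∃ j, v ∈ S → j < m ∧ v ∈ T j := by
    intro v
    by_cases hv : v ∈ S
    · obtain ⟨j, hj⟩ := hS v hv
      exact ⟨j, fun _ => hj⟩
    · exact ⟨0, fun h => absurd h hv⟩
  choose f hf using hS'
  have hlt : ∀ v ∈ S, c (f v) v < q := fun v hv => (hc _ (hf v hv).1).1 v (hf v hv).2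
  refine ⟨fun v => c (f v) v + q * f v, ?_, ?_⟩
  · intro v hv
    have h1 := (hf v hv).1
    have h2 := hlt v hv
    calc c (f v) v + q * f v < q + q * f v := by omega
      _ = (f v + 1) * q := by ring
      _ ≤ m * q := Nat.mul_le_mul_right q h1
  · intro u hu v hv huv heq
    simp only at heq
    have h1 := hlt u hu
    have h2 := hlt v hv
    have hfe : f u = f v := by
      have := congrArg (· / q) heq
      simpa [Nat.add_mul_div_left _ _ (show 0 < q by omega), Nat.div_eq_of_lt h1,
        Nat.div_eq_of_lt h2] using this
    rw [hfe] at heq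
    have hce : c (f v) u = c (f v) v := by omega
    exact (hc _ (hf v hv).1).2 u (hfe ▸ (hf u hu).2) v (hf v hv).2 huv hce

theorem of_colorable {R : SimpleGraph V} (hR : R.Colorable m)
    (h : ∀ u ∈ S, ∀ v ∈ S, G.Adj u v → R.Adj u v) : ColOn G S m := by
  obtain ⟨c⟩ := hR
  exact ⟨fun v => c v, fun v _ => (c v).2,
    fun u hu v hv huv heq => c.valid (h u hu v hv huv) (Fin.ext heq)⟩

theorem exists_stable_cover (h : ColOn G S m) : ∃ T : ℕ → Set V, (∀ v ∈ S, ∃ j < m, v ∈ T j) ∧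
    ∀ j, T j ⊆ S ∧ ∀ u ∈ T j, ∀ v ∈ T j, ¬ G.Adj u v := by
  obtain ⟨c, h1, h2⟩ := h
  refine ⟨fun j => {v | v ∈ S ∧ c v = j}, fun v hv => ⟨c v, h1 v hv, hv, rfl⟩, fun j =>
    ⟨fun v hv => hv.1, fun u hu v hv huv => h2 u hu.1 v hv.1 huv (hu.2.trans hv.2.symm)⟩⟩

/-- The component of `c` in the subgraph induced on `S`. -/
def component (G : SimpleGraph V) (S : Set V) (c : V) : Set V :=
  {v | (restrictTo G S).Reachable c v}

theorem component_subset {c : V} (hc : c ∈ S) : component G S c ⊆ S := by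
  intro v hv
  change (restrictTo G S).Reachable c v at hv
  rw [reachable_iff_reflTransGen] at hv
  induction hv with
  | refl => exact hc
  | tail _ h _ => exact h.2.2

theorem component_connected {c v : V} (hv : v ∈ component G S c) :
    (restrictTo G (component G S c)).Reachable c v := by
  change (restrictTo G S).Reachable c v at hv
  rw [reachable_iff_reflTransGen] at hv
  induction hv with
  | refl => exact Reachable.refl _
  | @tail a b h hab ih =>
    refine ih.trans (Adj.reachable ⟨hab.1, ?_, ?_⟩)
    · exact (reachable_iff_reflTransGen _ _).2 h
    · exact (reachable_iff_reflTransGen _ _).2 (h.tail hab)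

theorem of_components (h : ∀ c ∈ S, ColOn G (component G S c) m) : ColOn G S m := by
  classical
  let root : V → V := fun y => ((restrictTo G S).connectedComponentMk y).out
  have hroot : ∀ y, (restrictTo G S).Reachable (root y) y := fun y =>
    ConnectedComponent.exact ((restrictTo G S).connectedComponentMk y).out_eq
  have heq : ∀ y y', (restrictTo G S).Reachable y y' → root y = root y' := fun y y' h => by
    simp only [root, ConnectedComponent.sound h]
  have hrS : ∀ y ∈ S, root y ∈ S := fun y hy => component_subset hy (hroot y).symm
  have h' : ∀ c, ∃ f : V → ℕ, c ∈ S → (∀ v ∈ component G S c, f v < m) ∧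
      ∀ u ∈ component G S c, ∀ v ∈ component G S c, G.Adj u v → f u ≠ f v := by
    intro c
    by_cases hc : c ∈ S
    · obtain ⟨f, hf⟩ := h c hc
      exact ⟨f, fun _ => hf⟩
    · exact ⟨fun _ => 0, fun h => absurd h hc⟩
  choose f hf using h'
  refine ⟨fun v => f (root v) v, fun v hv => (hf _ (hrS v hv)).1 v (hroot v), ?_⟩
  intro u hu v hv huv
  have huv' : (restrictTo G S).Adj u v := ⟨huv, hu, hv⟩
  have e := heq u v huv'.reachable
  simp only [e]
  exact (hf _ (hrS v hv)).2 u (e ▸ hroot u) v (hroot v) huv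

end ColOn

theorem exists_indPath_of_reachable {G : SimpleGraph V} {S : Set V} {u v : V} (huv : u ≠ v)
    (h : (restrictTo G (insert u (insert v S))).Reachable u v) : ∃ l, IndPath G S l u v := by
  set H := restrictTo G (insert u (insert v S)) with hH
  obtain ⟨p, hp⟩ := h.exists_walk_length_eq_dist
  have hdist : ∀ i ≤ p.length, H.dist u (p.getVert i) = i := by
    intro i hi
    apply le_antisymm
    · refine (dist_le (p.take i)).trans ?_
      rw [Walk.take_length]
      omega
    · obtain ⟨w, hw⟩ := (p.take i).reachable.exists_walk_length_eq_dist
      have := dist_le (w.append (p.drop i))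
      rw [Walk.length_append, Walk.drop_length, hw, ← hp] at this
      omega
  have hadj : ∀ i < p.length, H.Adj (p.getVert i) (p.getVert (i + 1)) := fun i hi =>
    p.adj_getVert_succ hi
  have hpos : p.length ≠ 0 := by
    intro h0
    exact huv (Walk.eq_of_length_eq_zero h0)
  have hmem : ∀ i ≤ p.length, p.getVert i ∈ insert u (insert v S) := by
    intro i hi
    rcases hi.lt_or_eq with hlt | rfl
    · exact (hadj i hlt).2.1
    · simp
  have hne : ∀ i j, i < j → j ≤ p.length → p.getVert i ≠ p.getVert j := by
    intro i j hij hj he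
    have h1 := hdist i (by omega)
    rw [he, hdist j hj] at h1
    omega
  refine ⟨p.length, fun i => p.getVert i, p.getVert_zero, p.getVert_length, ?_, ?_⟩
  · intro i j hij hj
    refine ⟨hne i j hij hj, ?_, ?_⟩
    · intro ha
      have ha' : H.Adj (p.getVert i) (p.getVert j) := ⟨ha, hmem i (by omega), hmem j hj⟩
      obtain ⟨w, hw⟩ := (p.take i).reachable.exists_walk_length_eq_dist
      have := dist_le (w.concat ha')
      rw [Walk.length_concat, hw, hdist i (by omega), hdist j hj] at this
      omega
    · rintro rfl
      exact (hadj i (by omega)).1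
  · intro i hi hil
    rcases hmem i hil.le with he | he | he
    · exact absurd (p.getVert_zero.trans he.symm) (hne 0 i hi hil.le)
    · exact absurd (he.trans p.getVert_length.symm) (hne i _ hil le_rfl)
    · exact he

/-- Two distinct points of `X` joined by an odd induced path with interior in `D`. -/
def OddJoin (G : SimpleGraph V) (X D : Set V) (x x' : V) : Prop :=
  x ∈ X ∧ x' ∈ X ∧ x ≠ x' ∧ ∃ l, Odd l ∧ IndPath G D l x x'

/-- A stable set `X` whose points are pairwise joined through `D`, and a set `Y` of neighbours of
`X` which is anticomplete to `D`. -/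
structure Attachment (G : SimpleGraph V) (X Y D : Set V) : Prop where
  stable : ∀ x ∈ X, ∀ x' ∈ X, ¬ G.Adj x x'
  exists_adj : ∀ y ∈ Y, ∃ x ∈ X, G.Adj x y
  anti : ∀ d ∈ D, ∀ y ∈ Y, d ≠ y ∧ ¬ G.Adj d y
  join : ∀ x ∈ X, ∀ x' ∈ X, x ≠ x' → ∃ l, IndPath G D l x x'
  noP4 : NoInducedP4 (OddJoin G X D)

namespace Attachment

variable {G : SimpleGraph V} {X Y D : Set V}

theorem oddJoin_iff (h : Attachment G X Y D) (hG : OddHoleFree G) {x x' : V} (hx : x ∈ X)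
    (hx' : x' ∈ X) (hne : x ≠ x') {k : ℕ} (hk : IndPath G Y k x x') :
    OddJoin G X D x x' ↔ Odd k := by
  have key : ∀ l, IndPath G D l x x' → Even (l + k) := fun l hl =>
    hl.even_add hG hk hne (h.stable x hx x' hx') fun p hp _ _ q hq => h.anti p hp q hq
  constructor
  · rintro ⟨-, -, -, l, hl, hP⟩
    have := key l hP
    rcases hl with ⟨a, rfl⟩
    rcases this with ⟨b, hb⟩
    exact ⟨b - a - 1, by omega⟩
  · rintro ⟨a, rfl⟩
    obtain ⟨l, hl⟩ := h.join x hx x' hx' hne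
    obtain ⟨b, hb⟩ := key l hl
    exact ⟨hx, hx', hne, l, ⟨b - a - 1, by omega⟩, hl⟩

theorem not_oddJoin_of_common (h : Attachment G X Y D) (hG : OddHoleFree G) {x x' y : V}
    (hx : x ∈ X) (hx' : x' ∈ X) (hy : y ∈ Y) (hxy : G.Adj x y) (hx'y : G.Adj x' y) :
    ¬ OddJoin G X D x x' := by
  by_cases hne : x = x'
  · exact fun hj => hj.2.2.1 hne
  · rw [h.oddJoin_iff hG hx hx' hne
      (IndPath.two hxy hx'y.symm hne (h.stable x hx x' hx') hy)]
    decide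

theorem oddJoin_of_adj (h : Attachment G X Y D) (hG : OddHoleFree G) {x x' y y' : V}
    (hx : x ∈ X) (hx' : x' ∈ X) (hy : y ∈ Y) (hy' : y' ∈ Y) (hyy' : G.Adj y y')
    (hxy : G.Adj x y) (hx'y' : G.Adj x' y') (hxy' : ¬ G.Adj x y') (hx'y : ¬ G.Adj x' y) :
    OddJoin G X D x x' := by
  have hne : x ≠ x' := by
    rintro rfl
    exact hx'y hxy
  rw [h.oddJoin_iff hG hx hx' hne (IndPath.three hxy hyy' hx'y'.symm hne
    (h.stable x hx x' hx') hxy' (fun hh => hx'y hh.symm) hy hy')]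
  decide

/-- Edges of `G` inside `Y` whose ends have no common neighbour in `X`. -/
def farGraph (G : SimpleGraph V) (X Y : Set V) : SimpleGraph V where
  Adj a b := G.Adj a b ∧ a ∈ Y ∧ b ∈ Y ∧ ∀ x ∈ X, ¬ (G.Adj x a ∧ G.Adj x b)
  symm := ⟨fun _ _ h => ⟨h.1.symm, h.2.2.1, h.2.1, fun x hx hh => h.2.2.2 x hx hh.symm⟩⟩
  loopless := ⟨fun _ h => G.irrefl h.1⟩

theorem parityRep (h : Attachment G X Y D) (hG : OddHoleFree G) :
    ParityRep (farGraph G X Y) (fun y => {x | x ∈ X ∧ G.Adj x y}) (OddJoin G X D) where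
  nonempty {y y'} hy := by
    obtain ⟨x, hx, hxy⟩ := h.exists_adj y hy.2.1
    exact ⟨x, hx, hxy⟩
  symm := fun ⟨h1, h2, h3, l, hl, hP⟩ => ⟨h2, h1, h3.symm, l, hl, hP.symm⟩
  irrefl x hx := hx.2.2.1 rfl
  noP4 := h.noP4
  odd {y y'} hyy' x hx x' hx' :=
    h.oddJoin_of_adj hG hx.1 hx'.1 hyy'.2.1 hyy'.2.2.1 hyy'.1 hx.2 hx'.2
      (fun hh => hyy'.2.2.2 x hx.1 ⟨hx.2, hh⟩) (fun hh => hyy'.2.2.2 x' hx'.1 ⟨hh, hx'.2⟩)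
  even {a b c} hab hbc hac hnac x hx := by
    obtain ⟨hab, ha, hb, habX⟩ := hab
    obtain ⟨hbc, -, hc, hbcX⟩ := hbc
    obtain ⟨hx, hxa⟩ := hx
    by_cases hadj : G.Adj a c
    · have : ∃ z ∈ X, G.Adj z a ∧ G.Adj z c := by
        by_contra! hcon
        exact hnac ⟨hadj, ha, hc, fun x hx hh => hcon x hx hh.1 hh.2⟩
      obtain ⟨z, hz, hza, hzc⟩ := this
      exact ⟨z, ⟨hz, hzc⟩, h.not_oddJoin_of_common hG hx hz ha hxa hza⟩
    · by_cases hxc : G.Adj x c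
      · exact ⟨x, ⟨hx, hxc⟩, fun hh => hh.2.2.1 rfl⟩
      · obtain ⟨x', hx', hx'c⟩ := h.exists_adj c hc
        refine ⟨x', ⟨hx', hx'c⟩, ?_⟩
        by_cases hx'a : G.Adj x' a
        · exact h.not_oddJoin_of_common hG hx hx' ha hxa hx'a
        · have hne : x ≠ x' := by
            rintro rfl
            exact hxc hx'c
          rw [h.oddJoin_iff hG hx hx' hne (IndPath.four hxa hab hbc hx'c.symm hne
            (h.stable x hx x' hx') (fun hh => habX x hx ⟨hxa, hh⟩) hxc hadj
            (fun hh => hx'a hh.symm) (fun hh => hbcX x' hx' ⟨hh.symm, hx'c⟩) ha hb hc)]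
          decide

theorem exists_common_of_clique (h : Attachment G X Y D) (hG : OddHoleFree G) {Z : Set V}
    (hZY : Z ⊆ Y)
    (hZ : ∀ y ∈ Z, ∀ y' ∈ Z, G.Adj y y' → ∃ x ∈ X, G.Adj x y ∧ G.Adj x y') (s : Finset V) :
    s.Nonempty → (∀ v ∈ s, v ∈ Z) → G.IsClique s → ∃ x ∈ X, ∀ v ∈ s, G.Adj x v := by
  classical
  induction s using Finset.strongInduction with
  | _ s ih =>
    intro hs hsZ hclq
    obtain ⟨a, ha⟩ := hs
    by_cases h1 : s = {a}
    · subst h1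
      obtain ⟨x, hx, hxa⟩ := h.exists_adj a (hZY (hsZ a ha))
      exact ⟨x, hx, by simpa using hxa⟩
    · obtain ⟨b, hb, hba⟩ : ∃ b ∈ s, b ≠ a := by
        by_contra! hcon
        exact h1 (Finset.eq_singleton_iff_unique_mem.2 ⟨ha, hcon⟩)
      have hab := hclq ha hb hba.symm
      by_cases h2 : ∃ c ∈ s, c ≠ a ∧ c ≠ b
      · obtain ⟨c, hc, hca, hcb⟩ := h2
        have sub : ∀ e ∈ s, ∃ x ∈ X, ∀ v ∈ s, v ≠ e → G.Adj x v := by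
          intro e he
          obtain ⟨x, hx, hxs⟩ := ih (s.erase e) (Finset.erase_ssubset he)
            (by
              by_cases hea : e = a
              · exact ⟨b, Finset.mem_erase.2 ⟨hea ▸ hba, hb⟩⟩
              · exact ⟨a, Finset.mem_erase.2 ⟨fun hh => hea hh.symm, ha⟩⟩)
            (fun v hv => hsZ v (Finset.mem_of_mem_erase hv))
            (hclq.subset (by simp))
          exact ⟨x, hx, fun v hv hve => hxs v (Finset.mem_erase.2 ⟨hve, hv⟩)⟩
        obtain ⟨x, hx, hxs⟩ := sub a ha
        obtain ⟨x', hx', hx's⟩ := sub b hb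
        by_cases hxa : G.Adj x a
        · refine ⟨x, hx, fun v hv => ?_⟩
          by_cases hva : v = a
          · exact hva ▸ hxa
          · exact hxs v hv hva
        · by_cases hx'b : G.Adj x' b
          · refine ⟨x', hx', fun v hv => ?_⟩
            by_cases hvb : v = b
            · exact hvb ▸ hx'b
            · exact hx's v hv hvb
          · exact absurd (h.oddJoin_of_adj hG hx hx' (hZY (hsZ b hb)) (hZY (hsZ a ha)) hab.symm
              (hxs b hb hba) (hx's a ha hba.symm) hxa hx'b)
              (h.not_oddJoin_of_common hG hx hx' (hZY (hsZ c hc)) (hxs c hc hca)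
                (hx's c hc hcb))
      · obtain ⟨x, hx, hxa, hxb⟩ := hZ a (hsZ a ha) b (hsZ b hb) hab
        refine ⟨x, hx, fun v hv => ?_⟩
        by_cases hva : v = a
        · exact hva ▸ hxa
        · by_cases hvb : v = b
          · exact hvb ▸ hxb
          · exact absurd ⟨v, hv, hva, hvb⟩ h2

theorem colOn (h : Attachment G X Y D) (hG : OddHoleFree G) {m n : ℕ}
    (hclq : G.CliqueFree (m + 2)) (hn : ∀ S, NoCliqueIn G S (m + 1) → ColOn G S n) :
    ColOn G Y (2 ^ m * n) := by
  classical
  obtain ⟨c⟩ := (h.parityRep hG).colorable m (hclq.anti fun _ _ hab => hab.1)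
  refine ColOn.of_cover (fun j => {y | y ∈ Y ∧ (c y : ℕ) = j})
    (fun y hy => ⟨c y, (c y).2, hy, rfl⟩) fun j _ => hn _ ?_
  intro s hs hclqs
  obtain ⟨x, -, hx⟩ := h.exists_common_of_clique hG (Z := {y | y ∈ Y ∧ (c y : ℕ) = j})
    (fun y hy => hy.1)
    (by
      intro y hy y' hy' hyy'
      by_contra! hcon
      exact c.valid (v := y) (w := y')
        ⟨hyy', hy.1, hy'.1, fun x hx hh => hcon x hx hh.1 hh.2⟩
        (Fin.ext (hy.2.trans hy'.2.symm)))
    s (Finset.card_pos.1 (by rw [hclqs.card_eq]; omega)) hs hclqs.isClique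
  exact hclq _ (hclqs.insert hx)

end Attachment

/-- The union of the levels below `i`. -/
def below (L : ℕ → Set V) (i : ℕ) : Set V := {x | ∃ j < i, x ∈ L j}

theorem below_mono (L : ℕ → Set V) {i j : ℕ} (h : i ≤ j) : below L i ⊆ below L j :=
  fun _ ⟨k, hk, hx⟩ => ⟨k, hk.trans_le h, hx⟩

/-- Distinct vertices joined by an odd induced path through the levels below `i`. -/
def OddBelow (G : SimpleGraph V) (L : ℕ → Set V) (i : ℕ) (u v : V) : Prop :=
  u ≠ v ∧ ∃ l, Odd l ∧ IndPath G (below L i) l u v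

/-- A levelling with levels `0, …, t + 1` in which the parity of induced paths through lower
levels is determined by their ends, with a spine `s` through the levels `0, …, t`. -/
structure SpinedLevels (G : SimpleGraph V) (t : ℕ) (L : ℕ → Set V) (s : ℕ → V) : Prop where
  oddHoleFree : OddHoleFree G
  disj : ∀ {i j u}, u ∈ L i → u ∈ L j → i = j
  adj_le : ∀ {i j u v}, u ∈ L i → v ∈ L j → G.Adj u v → j ≤ i + 1
  zero : ∀ u ∈ L 0, u = s 0
  parent : ∀ {i u}, i ≤ t → u ∈ L (i + 1) → ∃ w ∈ L i, G.Adj w u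
  spine_mem : ∀ {i}, i ≤ t → s i ∈ L i
  spine_adj : ∀ {i}, i < t → G.Adj (s i) (s (i + 1))
  spine_unique : ∀ {i w}, i < t → w ∈ L i → G.Adj w (s (i + 1)) → w = s i
  parity : ∀ {i u v l m}, i ≤ t + 1 → u ∈ L i → v ∈ L i → u ≠ v → ¬ G.Adj u v →
    IndPath G (below L (min (i + 1) (t + 1))) l u v →
    IndPath G (below L (min (i + 1) (t + 1))) m u v → Even (l + m)

namespace OddBelow

variable {G : SimpleGraph V} {L : ℕ → Set V} {i : ℕ} {u v : V}

theorem symm (h : OddBelow G L i u v) : OddBelow G L i v u := by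
  obtain ⟨h, l, hl, hP⟩ := h
  exact ⟨h.symm, l, hl, hP.symm⟩

theorem comm : OddBelow G L i u v ↔ OddBelow G L i v u := ⟨symm, symm⟩

theorem of_adj (h : G.Adj u v) : OddBelow G L i u v :=
  ⟨h.ne, 1, odd_one, IndPath.of_adj h⟩

theorem irrefl : ¬ OddBelow G L i u u := fun h => h.1 rfl

end OddBelow

namespace SpinedLevels

variable {G : SimpleGraph V} {t : ℕ} {L : ℕ → Set V} {s : ℕ → V}

theorem not_adj_below (h : SpinedLevels G t L s) {i : ℕ} {u p : V} (hu : u ∈ L (i + 1))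
    (hp : p ∈ below L i) : u ≠ p ∧ ¬ G.Adj u p := by
  obtain ⟨j, hj, hp⟩ := hp
  constructor
  · rintro rfl
    have := h.disj hu hp
    omega
  · intro ha
    have := h.adj_le hp hu ha.symm
    omega

theorem reachable_root (h : SpinedLevels G t L s) (i : ℕ) : ∀ u ∈ L i, i ≤ t + 1 →
    (restrictTo G (insert u (below L i))).Reachable u (s 0) := by
  induction i with
  | zero =>
    intro u hu _
    rw [h.zero u hu]
  | succ i ih =>
    intro u hu hi
    obtain ⟨w, hw, hwu⟩ := h.parent (by omega) hu
    have hwm : w ∈ below L (i + 1) := ⟨i, by omega, hw⟩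
    refine Reachable.trans (Adj.reachable (v := w) ⟨hwu.symm, Or.inl rfl, Or.inr hwm⟩) ?_
    refine (ih w hw (by omega)).mono (restrictTo_mono G ?_)
    rw [Set.insert_subset_iff]
    exact ⟨Or.inr hwm, (below_mono L (by omega)).trans (Set.subset_insert _ _)⟩

theorem exists_indPath (h : SpinedLevels G t L s) {i : ℕ} (hi : i ≤ t + 1) {u v : V}
    (hu : u ∈ L i) (hv : v ∈ L i) (huv : u ≠ v) : ∃ l, IndPath G (below L i) l u v := by
  apply exists_indPath_of_reachable huv
  refine ((h.reachable_root i u hu hi).mono (restrictTo_mono G ?_)).trans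
    ((h.reachable_root i v hv hi).mono (restrictTo_mono G ?_)).symm
  · exact Set.insert_subset_insert (Set.subset_insert _ _)
  · exact Set.subset_insert _ _

theorem oddBelow_iff' (h : SpinedLevels G t L s) {i : ℕ} (hi : i ≤ t + 1) {u v : V}
    (hu : u ∈ L i) (hv : v ∈ L i) (huv : u ≠ v) (hnuv : ¬ G.Adj u v) {l : ℕ}
    (hl : IndPath G (below L (min (i + 1) (t + 1))) l u v) : OddBelow G L i u v ↔ Odd l := by
  have hsub : below L i ⊆ below L (min (i + 1) (t + 1)) := below_mono L (by omega)
  constructor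
  · rintro ⟨-, m, ⟨a, rfl⟩, hP⟩
    obtain ⟨b, hb⟩ := h.parity hi hu hv huv hnuv hl (hP.mono hsub)
    exact ⟨b - a - 1, by omega⟩
  · rintro ⟨a, rfl⟩
    obtain ⟨m, hm⟩ := h.exists_indPath hi hu hv huv
    obtain ⟨b, hb⟩ := h.parity hi hu hv huv hnuv hl (hm.mono hsub)
    exact ⟨huv, m, ⟨b - a - 1, by omega⟩, hm⟩

theorem oddBelow_iff (h : SpinedLevels G t L s) {i : ℕ} (hi : i ≤ t + 1) {u v : V}
    (hu : u ∈ L i) (hv : v ∈ L i) (huv : u ≠ v) (hnuv : ¬ G.Adj u v) {l : ℕ}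
    (hl : IndPath G (below L i) l u v) : OddBelow G L i u v ↔ Odd l :=
  h.oddBelow_iff' hi hu hv huv hnuv (hl.mono (below_mono L (by omega)))

theorem oddBelow_iff_level (h : SpinedLevels G t L s) {i : ℕ} (hi : i ≤ t) {u v : V}
    (hu : u ∈ L i) (hv : v ∈ L i) (huv : u ≠ v) (hnuv : ¬ G.Adj u v) {l : ℕ}
    (hl : IndPath G (below L (i + 1)) l u v) : OddBelow G L i u v ↔ Odd l :=
  h.oddBelow_iff' (by omega) hu hv huv hnuv (hl.mono (below_mono L (by omega)))

theorem not_oddBelow_of_common_level (h : SpinedLevels G t L s) {i : ℕ} (hi : i ≤ t) {u v w : V}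
    (hu : u ∈ L i) (hv : v ∈ L i) (hw : w ∈ L i) (huw : G.Adj u w) (hwv : G.Adj w v)
    (hnuv : ¬ G.Adj u v) : ¬ OddBelow G L i u v := by
  by_cases huv : u = v
  · exact fun hh => hh.1 huv
  · rw [h.oddBelow_iff_level hi hu hv huv hnuv
      (IndPath.two huw hwv huv hnuv ⟨i, by omega, hw⟩)]
    decide

theorem exists_indPath_parity (h : SpinedLevels G t L s) {i : ℕ} (hi : i ≤ t + 1) {u v : V}
    (hu : u ∈ L i) (hv : v ∈ L i) (huv : u ≠ v) :
    ∃ l, IndPath G (below L i) l u v ∧ (OddBelow G L i u v ↔ Odd l) := by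
  by_cases ha : G.Adj u v
  · exact ⟨1, IndPath.of_adj ha, by simp [OddBelow.of_adj ha]⟩
  · obtain ⟨l, hl⟩ := h.exists_indPath hi hu hv huv
    exact ⟨l, hl, h.oddBelow_iff hi hu hv huv ha hl⟩

theorem exists_lift (h : SpinedLevels G t L s) {j : ℕ} (hj : j ≤ t) {u v x y : V}
    (hu : u ∈ L (j + 1)) (hv : v ∈ L (j + 1)) (hnuv : ¬ G.Adj u v)
    (hx : x ∈ L j) (hy : y ∈ L j) (hxu : G.Adj x u) (hyv : G.Adj y v) (hxv : ¬ G.Adj x v)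
    (hyu : ¬ G.Adj y u) :
    ∃ l, IndPath G (insert x (insert y (below L j))) (l + 2) u v ∧
      (OddBelow G L j x y ↔ Odd l) := by
  have hxy : x ≠ y := by
    rintro rfl
    exact hxv hyv
  have huv : u ≠ v := by
    rintro rfl
    exact hyu hyv
  obtain ⟨l, hl, hpar⟩ := h.exists_indPath_parity (by omega) hx hy hxy
  have huy : u ≠ y := by
    rintro rfl
    have := h.disj hu hy
    omega
  have hvx : v ≠ x := by
    rintro rfl
    have := h.disj hv hx
    omega
  refine ⟨l, ?_, hpar⟩
  have h1 : IndPath G (insert x (below L j)) (l + 1) u y :=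
    hl.cons (Set.subset_insert _ _) (Or.inl rfl) hxu.symm huy (fun hh => hyu hh.symm)
      fun p hp => h.not_adj_below hu hp
  refine (h1.symm.cons (Set.insert_subset_insert (Set.subset_insert _ _)) (Or.inr (Or.inl rfl))
    hyv.symm huv.symm (fun hh => hnuv hh.symm) ?_).symm
  rintro p (rfl | hp)
  · exact ⟨hvx, fun hh => hxv hh.symm⟩
  · exact h.not_adj_below hv hp

theorem insert_below_subset {j : ℕ} {x y : V} (hx : x ∈ L j) (hy : y ∈ L j) :
    insert x (insert y (below L j)) ⊆ below L (j + 1) := by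
  rw [Set.insert_subset_iff, Set.insert_subset_iff]
  exact ⟨⟨j, by omega, hx⟩, ⟨j, by omega, hy⟩, below_mono L (by omega)⟩

theorem oddBelow_lift (h : SpinedLevels G t L s) {j : ℕ} (hj : j ≤ t) {u v x y : V}
    (hu : u ∈ L (j + 1)) (hv : v ∈ L (j + 1)) (hnuv : ¬ G.Adj u v)
    (hx : x ∈ L j) (hy : y ∈ L j) (hxu : G.Adj x u) (hyv : G.Adj y v) (hxv : ¬ G.Adj x v)
    (hyu : ¬ G.Adj y u) : OddBelow G L (j + 1) u v ↔ OddBelow G L j x y := by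
  obtain ⟨l, hl, hpar⟩ := h.exists_lift hj hu hv hnuv hx hy hxu hyv hxv hyu
  have huv : u ≠ v := by
    rintro rfl
    exact hyu hyv
  rw [h.oddBelow_iff (by omega) hu hv huv hnuv (hl.mono (insert_below_subset hx hy)), hpar]
  simp [parity_simps]

theorem not_oddBelow_of_common (h : SpinedLevels G t L s) {j : ℕ} (hj : j ≤ t) {u v x : V}
    (hu : u ∈ L (j + 1)) (hv : v ∈ L (j + 1)) (hnuv : ¬ G.Adj u v)
    (hx : x ∈ L j) (hxu : G.Adj x u) (hxv : G.Adj x v) : ¬ OddBelow G L (j + 1) u v := by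
  by_cases huv : u = v
  · exact fun hh => hh.1 huv
  · rw [h.oddBelow_iff (by omega) hu hv huv hnuv
      (IndPath.two hxu.symm hxv huv hnuv ⟨j, by omega, hx⟩)]
    decide

theorem adj_of_common_child (h : SpinedLevels G t L s) {j : ℕ} {x z u : V}
    (hu : u ∈ L (j + 1)) (hxu : G.Adj x u) (hzu : G.Adj z u) (hxz : OddBelow G L j x z) :
    G.Adj x z := by
  by_contra hn
  obtain ⟨hne, l, ⟨a, rfl⟩, hP⟩ := hxz
  obtain ⟨b, hb⟩ := hP.even_add h.oddHoleFree (IndPath.two (S := {u}) hxu hzu.symm hne hn rfl)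
    hne hn (by
      rintro p hp - - q rfl
      have := h.not_adj_below hu hp
      exact ⟨this.1.symm, fun hh => this.2 hh.symm⟩)
  omega

/-- An induced four-point path of odd connections between pairwise nonadjacent vertices is
inherited by any set of parents. -/
theorem lift_noP4 (h : SpinedLevels G t L s) {j : ℕ} (hj : j ≤ t) {K : Set V} (hK : K ⊆ L j)
    (hP4 : ∀ a ∈ K, ∀ b ∈ K, ∀ c ∈ K, ∀ d ∈ K, OddBelow G L j a b → OddBelow G L j b c →
      OddBelow G L j c d → ¬ OddBelow G L j a c → ¬ OddBelow G L j b d →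
      ¬ OddBelow G L j a d → False)
    {a b c d : V} (ha : a ∈ L (j + 1)) (hb : b ∈ L (j + 1)) (hc : c ∈ L (j + 1))
    (hd : d ∈ L (j + 1)) (hab : ¬ G.Adj a b) (hac : ¬ G.Adj a c) (had : ¬ G.Adj a d)
    (hbc : ¬ G.Adj b c) (hbd : ¬ G.Adj b d) (hcd : ¬ G.Adj c d)
    (hKa : ∃ x ∈ K, G.Adj x a) (hKb : ∃ x ∈ K, G.Adj x b) (hKc : ∃ x ∈ K, G.Adj x c)
    (hKd : ∃ x ∈ K, G.Adj x d)
    (oab : OddBelow G L (j + 1) a b) (obc : OddBelow G L (j + 1) b c)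
    (ocd : OddBelow G L (j + 1) c d) (oac : ¬ OddBelow G L (j + 1) a c)
    (obd : ¬ OddBelow G L (j + 1) b d) (oad : ¬ OddBelow G L (j + 1) a d) : False := by
  have odd : ∀ {p q x y}, p ∈ L (j + 1) → q ∈ L (j + 1) → ¬ G.Adj p q →
      OddBelow G L (j + 1) p q → x ∈ K → y ∈ K → G.Adj x p → G.Adj y q →
      OddBelow G L j x y := by
    intro p q x y hp hq hpq opq hx hy hxp hyq
    refine (h.oddBelow_lift hj hp hq hpq (hK hx) (hK hy) hxp hyq ?_ ?_).1 opq
    · exact fun hh => h.not_oddBelow_of_common hj hp hq hpq (hK hx) hxp hh opq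
    · exact fun hh => h.not_oddBelow_of_common hj hp hq hpq (hK hy) hh hyq opq
  have disj : ∀ {p q x}, p ∈ L (j + 1) → q ∈ L (j + 1) → ¬ G.Adj p q →
      OddBelow G L (j + 1) p q → x ∈ K → G.Adj x p → ¬ G.Adj x q :=
    fun hp hq hpq opq hx hxp hxq =>
      h.not_oddBelow_of_common hj hp hq hpq (hK hx) hxp hxq opq
  have even : ∀ {p q x y}, p ∈ L (j + 1) → q ∈ L (j + 1) → ¬ G.Adj p q →
      ¬ OddBelow G L (j + 1) p q → x ∈ K → y ∈ K → G.Adj x p → G.Adj y q →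
      (∀ z ∈ K, ¬ (G.Adj z p ∧ G.Adj z q)) → ¬ OddBelow G L j x y := by
    intro p q x y hp hq hpq opq hx hy hxp hyq hno
    rwa [← h.oddBelow_lift hj hp hq hpq (hK hx) (hK hy) hxp hyq (fun hh => hno x hx ⟨hxp, hh⟩)
      (fun hh => hno y hy ⟨hh, hyq⟩)]
  have pick : ∀ {p q}, p ∈ L (j + 1) → q ∈ L (j + 1) → ¬ G.Adj p q →
      ¬ OddBelow G L (j + 1) p q → (∃ x ∈ K, G.Adj x p) → (∃ x ∈ K, G.Adj x q) →
      ∃ x ∈ K, ∃ y ∈ K, G.Adj x p ∧ G.Adj y q ∧ ¬ OddBelow G L j x y := by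
    intro p q hp hq hpq opq hKp hKq
    by_cases hz : ∃ z ∈ K, G.Adj z p ∧ G.Adj z q
    · obtain ⟨z, hz, hzp, hzq⟩ := hz
      exact ⟨z, hz, z, hz, hzp, hzq, OddBelow.irrefl⟩
    · push Not at hz
      obtain ⟨x, hx, hxp⟩ := hKp
      obtain ⟨y, hy, hyq⟩ := hKq
      exact ⟨x, hx, y, hy, hxp, hyq, even hp hq hpq opq hx hy hxp hyq
        fun z hzK hh => hz z hzK hh.1 hh.2⟩
  by_cases hz : ∃ z ∈ K, G.Adj z a ∧ G.Adj z d
  · obtain ⟨z, hz, hza, hzd⟩ := hz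
    obtain ⟨v, hv, hvb, hvd⟩ : ∃ v ∈ K, G.Adj v b ∧ G.Adj v d := by
      by_contra! hcon
      obtain ⟨y, hy, hyb⟩ := hKb
      exact even hb hd hbd obd hy hz hyb hzd (fun v hv hh => hcon v hv hh.1 hh.2)
        (odd ha hb hab oab hz hy hza hyb).symm
    obtain ⟨w, hw, hwa, hwc⟩ : ∃ w ∈ K, G.Adj w a ∧ G.Adj w c := by
      by_contra! hcon
      obtain ⟨y, hy, hyc⟩ := hKc
      exact even ha hc hac oac hz hy hza hyc (fun v hv hh => hcon v hv hh.1 hh.2)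
        (odd hc hd hcd ocd hy hz hyc hzd).symm
    have hzv : G.Adj z v :=
      h.adj_of_common_child hd hzd hvd (odd ha hb hab oab hz hv hza hvb)
    have hwz : G.Adj w z :=
      h.adj_of_common_child ha hwa hza (odd hc hd hcd ocd hw hz hwc hzd)
    have hva : ¬ G.Adj v a := fun hh => disj ha hb hab oab hv hh hvb
    have hwd : ¬ G.Adj w d := fun hh => disj hc hd hcd ocd hw hwc hh
    by_cases hwv : G.Adj w v
    · exact oad ((h.oddBelow_lift hj ha hd had (hK hw) (hK hv) hwa hvd hwd hva).2
        (OddBelow.of_adj hwv))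
    · have hb' : ∀ x ∈ K, x ∈ below L (j + 1) := fun x hx => ⟨j, by omega, hK hx⟩
      have hodd := (h.oddBelow_iff (by omega) hb hc obc.1 hbc (IndPath.four hvb.symm hzv.symm
        hwz.symm hwc obc.1 hbc (fun hh => disj ha hb hab oab hz hza hh.symm)
        (fun hh => disj ha hb hab oab hw hwa hh.symm) (fun hh => hwv hh.symm)
        (disj hb hc hbc obc hv hvb)
        (fun hh => disj hc hd hcd ocd hz hh hzd) (hb' v hv) (hb' z hz) (hb' w hw))).1 obc
      exact absurd hodd (by decide)
  · push Not at hz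
    obtain ⟨xa, hxa, xc, hxc, hxaa, hxcc, nac⟩ := pick ha hc hac oac hKa hKc
    obtain ⟨xb, hxb, xd, hxd, hxbb, hxdd, nbd⟩ := pick hb hd hbd obd hKb hKd
    exact hP4 xa hxa xb hxb xc hxc xd hxd (odd ha hb hab oab hxa hxb hxaa hxbb)
      (odd hb hc hbc obc hxb hxc hxbb hxcc) (odd hc hd hcd ocd hxc hxd hxcc hxdd) nac nbd
      (even ha hd had oad hxa hxd hxaa hxdd fun z hzK hh => hz z hzK hh.1 hh.2)

end SpinedLevels

/-- A class of vertices in each level, generated from a set `W i` of vertices attached to a spine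
and the vertices in `F i` having a parent in the class of the previous level. -/
def classOf (G : SimpleGraph V) (W F : ℕ → Set V) : ℕ → Set V
  | 0 => W 0
  | j + 1 => W (j + 1) ∪ {u | u ∈ F (j + 1) ∧ ∃ w ∈ classOf G W F j, G.Adj w u}

/-- The properties of a class which make its odd connections free of induced four-point paths. -/
structure IsSpineClass (G : SimpleGraph V) (t : ℕ) (L W F : ℕ → Set V) (δ : Prop) : Prop where
  attached_mem : ∀ {i u}, i ≤ t → u ∈ W i → u ∈ L i
  free_mem : ∀ {i u}, i ≤ t → u ∈ F i → u ∈ L i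
  attached_even : ∀ {i u v}, i ≤ t → u ∈ W i → v ∈ W i → ¬ G.Adj u v → ¬ OddBelow G L i u v
  not_adj : ∀ {j u v}, j + 1 ≤ t → u ∈ F (j + 1) → v ∈ W (j + 1) → ¬ G.Adj u v
  join : ∀ {j u v w}, j + 1 ≤ t → u ∈ F (j + 1) → w ∈ classOf G W F j → G.Adj w u →
    v ∈ W (j + 1) → (OddBelow G L (j + 1) v u ↔ δ)
  same_parents : ∀ {j u v w}, j + 1 ≤ t → u ∈ F (j + 1) → v ∈ F (j + 1) → G.Adj u v → w ∈ L j →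
    G.Adj w u → G.Adj w v
  common : ∀ {j}, j + 1 ≤ t → ∃ x, ∀ w ∈ W (j + 1), G.Adj x w

namespace IsSpineClass

variable {G : SimpleGraph V} {t : ℕ} {L W F : ℕ → Set V} {s : ℕ → V} {δ : Prop}

theorem subset (hc : IsSpineClass G t L W F δ) {i : ℕ} (hi : i ≤ t) : classOf G W F i ⊆ L i := by
  intro u hu
  cases i with
  | zero => exact hc.attached_mem hi hu
  | succ j =>
    rcases hu with hu | hu
    · exact hc.attached_mem hi hu
    · exact hc.free_mem hi hu.1

theorem twin (hc : IsSpineClass G t L W F δ) (h : SpinedLevels G t L s) {j : ℕ} (hj : j + 1 ≤ t)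
    {u v x : V} (hu : u ∈ classOf G W F (j + 1)) (hv : v ∈ classOf G W F (j + 1))
    (hx : x ∈ classOf G W F (j + 1)) (huv : G.Adj u v) (hux : ¬ G.Adj u x) (hvx : ¬ G.Adj v x) :
    OddBelow G L (j + 1) u x ↔ OddBelow G L (j + 1) v x := by
  have hjt : j ≤ t := by omega
  have hxL := hc.subset hj hx
  have huL := hc.subset hj hu
  have hvL := hc.subset hj hv
  rcases hu with hu | ⟨hu, w, hw, hwu⟩
  · rcases hv with hv | ⟨hv, -⟩
    · rcases hx with hx | ⟨hx, y, hy, hyx⟩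
      · simp only [hc.attached_even hj hu hx hux, hc.attached_even hj hv hx hvx]
      · rw [hc.join hj hx hy hyx hu, hc.join hj hx hy hyx hv]
    · exact absurd huv.symm (hc.not_adj hj hv hu)
  · rcases hv with hv | ⟨hv, w', hw', hw'v⟩
    · exact absurd huv (hc.not_adj hj hu hv)
    · rcases hx with hx | ⟨hx, y, hy, hyx⟩
      · rw [OddBelow.comm, hc.join hj hu hw hwu hx, OddBelow.comm, hc.join hj hv hw' hw'v hx]
      · have hwL := hc.subset hjt hw
        have hyL := hc.subset hjt hy
        have hwv := hc.same_parents hj hu hv huv hwL hwu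
        by_cases hwx : G.Adj w x
        · simp only [h.not_oddBelow_of_common hjt huL hxL hux hwL hwu hwx,
            h.not_oddBelow_of_common hjt hvL hxL hvx hwL hwv hwx]
        · by_cases hyu : G.Adj y u
          · have hyv := hc.same_parents hj hu hv huv hyL hyu
            simp only [h.not_oddBelow_of_common hjt huL hxL hux hyL hyu hyx,
              h.not_oddBelow_of_common hjt hvL hxL hvx hyL hyv hyx]
          · have hyv : ¬ G.Adj y v := fun hh => hyu (hc.same_parents hj hv hu huv.symm hyL hh)
            rw [h.oddBelow_lift hjt huL hxL hux hwL hyL hwu hyx hwx hyu,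
              h.oddBelow_lift hjt hvL hxL hvx hwL hyL hwv hyx hwx hyv]

theorem noP4 (hc : IsSpineClass G t L W F δ) (h : SpinedLevels G t L s) (i : ℕ) : i ≤ t →
    ∀ a ∈ classOf G W F i, ∀ b ∈ classOf G W F i, ∀ c ∈ classOf G W F i, ∀ d ∈ classOf G W F i,
      OddBelow G L i a b → OddBelow G L i b c → OddBelow G L i c d → ¬ OddBelow G L i a c →
      ¬ OddBelow G L i b d → ¬ OddBelow G L i a d → False := by
  induction i with
  | zero =>
    intro hi a ha b hb c hc' d hd hab
    exact absurd ((h.zero a (hc.subset hi ha)).trans (h.zero b (hc.subset hi hb)).symm) hab.1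
  | succ j ih =>
    intro hj a ha b hb c hc' d hd oab obc ocd oac obd oad
    have hjt : j ≤ t := by omega
    have nac : ¬ G.Adj a c := fun hh => oac (OddBelow.of_adj hh)
    have nbd : ¬ G.Adj b d := fun hh => obd (OddBelow.of_adj hh)
    have nad : ¬ G.Adj a d := fun hh => oad (OddBelow.of_adj hh)
    have hmem : ∀ x ∈ classOf G W F (j + 1), x ∈ below L (j + 1 + 1) := fun x hx =>
      ⟨j + 1, by omega, hc.subset hj hx⟩
    have nbc : ¬ G.Adj b c := by
      intro hbc
      by_cases hab : G.Adj a b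
      · by_cases hcd : G.Adj c d
        · have hne : a ≠ d := by
            rintro rfl
            exact nac hcd.symm
          exact oad ((h.oddBelow_iff_level hj (hc.subset hj ha) (hc.subset hj hd) hne nad
            (IndPath.three hab hbc hcd hne nad nac nbd (hmem b hb) (hmem c hc'))).2 (by decide))
        · exact obd ((hc.twin h hj hb hc' hd hbc nbd hcd).2 ocd)
      · exact oac ((hc.twin h hj hb hc' ha hbc (fun hh => hab hh.symm)
          (fun hh => nac hh.symm)).1 oab.symm).symm
    have nab : ¬ G.Adj a b := fun hab => oac ((hc.twin h hj ha hb hc' hab nac nbc).2 obc)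
    have ncd : ¬ G.Adj c d := fun hcd => obd ((hc.twin h hj hc' hd hb hcd
      (fun hh => nbc hh.symm) (fun hh => nbd hh.symm)).1 obc.symm).symm
    have hjoin : ∀ {x y}, x ∈ W (j + 1) → y ∈ classOf G W F (j + 1) → y ∉ W (j + 1) →
        (OddBelow G L (j + 1) x y ↔ δ) := by
      rintro x y hx (hy | ⟨hy, w, hw, hwy⟩) hyW
      · exact absurd hy hyW
      · exact hc.join hj hy hw hwy hx
    have hWW : ∀ {x y}, x ∈ W (j + 1) → y ∈ W (j + 1) → ¬ G.Adj x y →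
        ¬ OddBelow G L (j + 1) x y := fun hx hy hxy => hc.attached_even hj hx hy hxy
    have hfree : ∀ {x}, x ∈ classOf G W F (j + 1) → x ∉ W (j + 1) →
        ∃ w ∈ classOf G W F j, G.Adj w x := by
      rintro x (hx | ⟨-, hx⟩) hxW
      · exact absurd hx hxW
      · exact hx
    have hW : a ∉ W (j + 1) ∧ b ∉ W (j + 1) ∧ c ∉ W (j + 1) ∧ d ∉ W (j + 1) := by
      by_cases hδ : δ
      · have same : ∀ {x y}, x ∈ classOf G W F (j + 1) → y ∈ classOf G W F (j + 1) →
            ¬ OddBelow G L (j + 1) x y → (x ∈ W (j + 1) ↔ y ∈ W (j + 1)) := by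
          intro x y hx hy hxy
          constructor
          · intro hxW
            by_contra hyW
            exact hxy ((hjoin hxW hy hyW).2 hδ)
          · intro hyW
            by_contra hxW
            exact hxy ((hjoin hyW hx hxW).2 hδ).symm
        have h1 := same ha hc' oac
        have h2 := same hb hd obd
        have h3 := same ha hd oad
        have h4 : ¬ (a ∈ W (j + 1) ∧ b ∈ W (j + 1)) := fun hh => hWW hh.1 hh.2 nab oab
        tauto
      · have none : ∀ {x y}, x ∈ classOf G W F (j + 1) → y ∈ classOf G W F (j + 1) →
            ¬ G.Adj x y → OddBelow G L (j + 1) x y → x ∉ W (j + 1) := by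
          intro x y hx hy hxy oxy hxW
          by_cases hyW : y ∈ W (j + 1)
          · exact hWW hxW hyW hxy oxy
          · exact hδ ((hjoin hxW hy hyW).1 oxy)
        exact ⟨none ha hb nab oab, none hb hc' nbc obc, none hc' hd ncd ocd,
          none hd hc' (fun hh => ncd hh.symm) ocd.symm⟩
    exact h.lift_noP4 hjt (hc.subset hjt) (ih hjt) (hc.subset hj ha) (hc.subset hj hb)
      (hc.subset hj hc') (hc.subset hj hd) nab nac nad nbc nbd ncd (hfree ha hW.1)
      (hfree hb hW.2.1) (hfree hc' hW.2.2.1) (hfree hd hW.2.2.2) oab obc ocd oac obd oad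

theorem noCliqueIn (hc : IsSpineClass G t L W F δ) (h : SpinedLevels G t L s) {k : ℕ}
    (hG : G.CliqueFree (k + 3)) : NoCliqueIn G (classOf G W F t) (k + 2) := by
  classical
  intro q hq hclq
  obtain ⟨u, hu, v, hv, huv⟩ := Finset.one_lt_card.1 (by rw [hclq.card_eq]; omega)
  suffices ∃ x, ∀ w ∈ q, G.Adj x w by
    obtain ⟨x, hx⟩ := this
    exact hG _ (hclq.insert hx)
  rcases t with _ | j
  · exact absurd ((h.zero u (hc.subset le_rfl (hq u hu))).trans
      (h.zero v (hc.subset le_rfl (hq v hv))).symm) huv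
  · rcases hq u hu with huW | ⟨huF, w, hw, hwu⟩
    · obtain ⟨x, hx⟩ := hc.common le_rfl
      refine ⟨x, fun w hw => hx w ?_⟩
      by_cases hwu : w = u
      · exact hwu ▸ huW
      · rcases hq w hw with hwW | ⟨hwF, -⟩
        · exact hwW
        · exact absurd (hclq.isClique hw hu hwu) (hc.not_adj le_rfl hwF huW)
    · refine ⟨w, fun v hv => ?_⟩
      by_cases hvu : v = u
      · exact hvu ▸ hwu
      · have huv := hclq.isClique hu hv fun hh => hvu hh.symm
        rcases hq v hv with hvW | ⟨hvF, -⟩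
        · exact absurd huv (hc.not_adj le_rfl huF hvW)
        · exact hc.same_parents le_rfl huF hvF huv (hc.subset (by omega) hw) hwu

theorem colOn_top (hc : IsSpineClass G t L W F δ) (h : SpinedLevels G t L s) {k : ℕ}
    (hG : G.CliqueFree (k + 3)) : ColOn G (classOf G W F t) (2 ^ k) := by
  set K := classOf G W F t with hK
  have hKL : K ⊆ L t := hc.subset le_rfl
  have hrep : ParityRep (restrictTo G K) (fun z => {z})
      (fun x y => x ∈ K ∧ y ∈ K ∧ OddBelow G L t x y) :=
    { nonempty := fun {y _} _ => ⟨y, rfl⟩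
      symm := fun hh => ⟨hh.2.1, hh.1, hh.2.2.symm⟩
      irrefl := fun x hh => OddBelow.irrefl hh.2.2
      noP4 := fun a b c d hab hbc hcd nac nbd nad =>
        hc.noP4 h t le_rfl a hab.1 b hab.2.1 c hcd.1 d hcd.2.1 hab.2.2 hbc.2.2 hcd.2.2
          (fun hh => nac ⟨hab.1, hcd.1, hh⟩) (fun hh => nbd ⟨hab.2.1, hcd.2.1, hh⟩)
          (fun hh => nad ⟨hab.1, hcd.2.1, hh⟩)
      odd := by
        rintro y y' hyy' x rfl x' rfl
        exact ⟨hyy'.2.1, hyy'.2.2, OddBelow.of_adj hyy'.1⟩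
      even := by
        rintro a b c hab hbc hac hnac x rfl
        refine ⟨c, rfl, fun hh => ?_⟩
        exact h.not_oddBelow_of_common_level le_rfl (hKL hab.2.1) (hKL hbc.2.2) (hKL hbc.2.1)
          hab.1 hbc.1 (fun ha => hnac ⟨ha, hab.2.1, hbc.2.2⟩) hh.2.2 }
  refine ColOn.of_colorable (hrep.colorable k ?_) fun u hu v hv huv => ⟨huv, hu, hv⟩
  intro q hq
  refine hc.noCliqueIn h hG q ?_ ⟨fun a ha b hb hab => (hq.isClique ha hb hab).1, hq.card_eq⟩
  intro v hv
  obtain ⟨w, hw, hwv⟩ := Finset.exists_mem_ne (by rw [hq.card_eq]; omega) v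
  exact (hq.isClique hv hw hwv.symm).2.1

/-- The vertices of `C` above a class in the last level but one are coloured in two steps. -/
theorem colOn_above (hc : IsSpineClass G t L W F δ) (h : SpinedLevels G t L s) {k n : ℕ}
    (hG : G.CliqueFree (k + 3)) (hn : ∀ S, NoCliqueIn G S (k + 2) → ColOn G S n) {C : Set V}
    (hC : ∀ d ∈ below L (t + 1), ∀ y ∈ C, d ≠ y ∧ ¬ G.Adj d y) :
    ColOn G {y | y ∈ C ∧ ∃ a ∈ L (t + 1), G.Adj a y ∧ ∃ x ∈ classOf G W F t, G.Adj x a}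
      (2 ^ k * (2 ^ (k + 1) * n) * (2 ^ (k + 1) * n)) := by
  set K := classOf G W F t with hK
  have hKL : K ⊆ L t := hc.subset le_rfl
  have hA : ColOn G {a | a ∈ L (t + 1) ∧ ∃ x ∈ K, G.Adj x a} (2 ^ k * (2 ^ (k + 1) * n)) := by
    obtain ⟨T, hT, hTK⟩ := (hc.colOn_top h hG).exists_stable_cover
    refine ColOn.of_cover (fun j => {a | a ∈ L (t + 1) ∧ ∃ x ∈ T j, G.Adj x a}) ?_ ?_
    · rintro a ⟨ha, x, hx, hxa⟩
      obtain ⟨j, hj, hxj⟩ := hT x hx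
      exact ⟨j, hj, ha, x, hxj, hxa⟩
    · intro j _
      refine Attachment.colOn (X := T j) (D := below L t) ?_ h.oddHoleFree hG hn
      refine ⟨(hTK j).2, fun y hy => hy.2, ?_, ?_, ?_⟩
      · rintro d hd y ⟨hy, -⟩
        have := h.not_adj_below hy hd
        exact ⟨this.1.symm, fun hh => this.2 hh.symm⟩
      · intro x hx x' hx' hne
        exact h.exists_indPath (by omega) (hKL ((hTK j).1 hx)) (hKL ((hTK j).1 hx')) hne
      · intro a b c d hab hbc hcd nac nbd nad
        exact hc.noP4 h t le_rfl a ((hTK j).1 hab.1) b ((hTK j).1 hab.2.1) c ((hTK j).1 hcd.1) d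
          ((hTK j).1 hcd.2.1) hab.2.2 hbc.2.2 hcd.2.2
          (fun hh => nac ⟨hab.1, hcd.1, hh⟩) (fun hh => nbd ⟨hab.2.1, hcd.2.1, hh⟩)
          (fun hh => nad ⟨hab.1, hcd.2.1, hh⟩)
  obtain ⟨T, hT, hTA⟩ := hA.exists_stable_cover
  refine ColOn.of_cover (fun j => {y | y ∈ C ∧ ∃ x ∈ T j, G.Adj x y}) ?_ ?_
  · rintro y ⟨hy, a, ha, hay, hx⟩
    obtain ⟨j, hj, haj⟩ := hT a ⟨ha, hx⟩
    exact ⟨j, hj, hy, a, haj, hay⟩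
  · intro j _
    have hTL : ∀ x ∈ T j, x ∈ L (t + 1) := fun x hx => ((hTA j).1 hx).1
    refine Attachment.colOn (X := T j) (D := below L (t + 1)) ?_ h.oddHoleFree hG hn
    refine ⟨(hTA j).2, fun y hy => hy.2, fun d hd y hy => hC d hd y hy.1, ?_, ?_⟩
    · intro x hx x' hx' hne
      exact h.exists_indPath le_rfl (hTL x hx) (hTL x' hx') hne
    · intro a b c d hab hbc hcd nac nbd nad
      have ha := hab.1
      have hb := hab.2.1
      have hc' := hcd.1
      have hd := hcd.2.1
      exact h.lift_noP4 le_rfl hKL (hc.noP4 h t le_rfl) (hTL a ha) (hTL b hb) (hTL c hc')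
        (hTL d hd) ((hTA j).2 a ha b hb) ((hTA j).2 a ha c hc') ((hTA j).2 a ha d hd)
        ((hTA j).2 b hb c hc') ((hTA j).2 b hb d hd) ((hTA j).2 c hc' d hd)
        ((hTA j).1 ha).2 ((hTA j).1 hb).2 ((hTA j).1 hc').2 ((hTA j).1 hd).2
        hab.2.2 hbc.2.2 hcd.2.2 (fun hh => nac ⟨ha, hc', hh⟩) (fun hh => nbd ⟨hb, hd, hh⟩)
        (fun hh => nad ⟨ha, hd, hh⟩)

end IsSpineClass

namespace SpinedLevels

variable {G : SimpleGraph V} {t : ℕ} {L : ℕ → Set V} {s : ℕ → V}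

/-- The vertices of level `i ≥ 1` with prescribed adjacency to the spine vertices of the previous
and the same level. -/
def spineType (G : SimpleGraph V) (L : ℕ → Set V) (s : ℕ → V) (p q : Prop) : ℕ → Set V
  | 0 => ∅
  | j + 1 => {u | u ∈ L (j + 1) ∧ (G.Adj (s j) u ↔ p) ∧ (G.Adj (s (j + 1)) u ↔ q)}

/-- The vertices off the spine neighbourhood with prescribed parity to the spine. -/
def freeType (G : SimpleGraph V) (L : ℕ → Set V) (s : ℕ → V) (o : Prop) (i : ℕ) : Set V :=
  {u | u ∈ spineType G L s False False i ∧ (OddBelow G L i u (s i) ↔ o)}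

theorem ne_spine (h : SpinedLevels G t L s) {j : ℕ} (hj : j + 1 ≤ t) {u : V}
    (hu : ¬ G.Adj (s j) u) : u ≠ s (j + 1) := by
  rintro rfl
  exact hu (h.spine_adj hj)

theorem oddBelow_spine (h : SpinedLevels G t L s) {j : ℕ} (hj : j + 1 ≤ t) {u w : V}
    (hu : u ∈ spineType G L s False False (j + 1)) (hw : w ∈ L j) (hwu : G.Adj w u) :
    OddBelow G L (j + 1) u (s (j + 1)) ↔ OddBelow G L j w (s j) := by
  obtain ⟨huL, hu1, hu2⟩ := hu
  rw [iff_false] at hu1 hu2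
  refine h.oddBelow_lift (by omega) huL (h.spine_mem hj) (fun hh => hu2 hh.symm) hw
    (h.spine_mem (by omega)) hwu (h.spine_adj hj) (fun hh => ?_) hu1
  rw [h.spine_unique hj hw hh] at hwu
  exact hu1 hwu

theorem exists_indPath_spine (h : SpinedLevels G t L s) {j : ℕ} (hj : j + 1 ≤ t) {u w : V}
    (hu : u ∈ spineType G L s False False (j + 1)) (hw : w ∈ L j) (hwu : G.Adj w u) :
    ∃ l, IndPath G (insert w (insert (s j) (below L j))) l u (s (j + 1)) ∧
      (OddBelow G L (j + 1) u (s (j + 1)) ↔ Odd l) := by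
  rw [h.oddBelow_spine hj hu hw hwu]
  obtain ⟨huL, hu1, hu2⟩ := hu
  rw [iff_false] at hu1 hu2
  obtain ⟨l, hl, hpar⟩ := h.exists_lift (by omega) huL (h.spine_mem hj) (fun hh => hu2 hh.symm) hw
    (h.spine_mem (by omega)) hwu (h.spine_adj hj) (fun hh => by
      rw [h.spine_unique hj hw hh] at hwu
      exact hu1 hwu) hu1
  refine ⟨l + 2, hl, hpar.trans ?_⟩
  simp [parity_simps]

theorem free_same_parents (h : SpinedLevels G t L s) {o : Prop} {j : ℕ} {u v w : V}
    (hj : j + 1 ≤ t) (hu : u ∈ freeType G L s o (j + 1)) (hv : v ∈ freeType G L s o (j + 1))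
    (huv : G.Adj u v) (hw : w ∈ L j) (hwu : G.Adj w u) : G.Adj w v := by
  by_contra hwv
  obtain ⟨l, hl, hpar⟩ := h.exists_indPath_spine hj hu.1 hw hwu
  obtain ⟨⟨hvL, hv1, hv2⟩, hvo⟩ := hv
  rw [iff_false] at hv1 hv2
  have hsub := insert_below_subset hw (h.spine_mem (i := j) (by omega))
  have hvs := h.ne_spine hj hv1
  have hlev : ∀ x ∈ L j, v ≠ x := by
    rintro x hx rfl
    have := h.disj hx hvL
    omega
  have hP : IndPath G (below L (j + 1 + 1)) (l + 1) v (s (j + 1)) := by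
    refine hl.cons (hsub.trans (below_mono L (by omega))) ⟨j + 1, by omega, hu.1.1⟩ huv.symm hvs
      (fun hh => hv2 hh.symm) ?_
    rintro p (rfl | rfl | hp)
    · exact ⟨hlev _ hw, fun hh => hwv hh.symm⟩
    · exact ⟨hlev _ (h.spine_mem (by omega)), fun hh => hv1 hh.symm⟩
    · exact h.not_adj_below hvL hp
  have hpar' := h.oddBelow_iff_level hj hvL (h.spine_mem hj) hvs (fun hh => hv2 hh.symm) hP
  rw [hvo] at hpar'
  rw [hu.2, hpar'] at hpar
  simp only [parity_simps, ← Nat.not_even_iff_odd] at hpar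
  tauto

/-- The set attached to the spine which generates the class of vertices evenly connected to the
spine. -/
def evenAttached (G : SimpleGraph V) (L : ℕ → Set V) (s : ℕ → V) : ℕ → Set V
  | 0 => {s 0}
  | j + 1 => spineType G L s True False (j + 1)

/-- Vertices adjacent to the spine vertices of both levels, in the levels of parity `ε`. -/
def bothAttached (G : SimpleGraph V) (L : ℕ → Set V) (s : ℕ → V) (ε : ℕ) (i : ℕ) : Set V :=
  {u | u ∈ spineType G L s True True i ∧ i % 2 = ε}

theorem not_oddBelow_of_mem_even (h : SpinedLevels G t L s) {i : ℕ} (hi : i ≤ t) {u : V}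
    (hu : u ∈ classOf G (evenAttached G L s) (freeType G L s False) i) :
    ¬ OddBelow G L i u (s i) := by
  cases i with
  | zero =>
    obtain rfl : u = s 0 := hu
    exact OddBelow.irrefl
  | succ j =>
    rcases hu with ⟨huL, hu1, hu2⟩ | ⟨hu, -⟩
    · rw [iff_true] at hu1
      rw [iff_false] at hu2
      exact h.not_oddBelow_of_common (by omega) huL (h.spine_mem hi) (fun hh => hu2 hh.symm)
        (h.spine_mem (by omega)) hu1 (h.spine_adj hi)
    · exact hu.2.1

theorem oddBelow_of_mem_odd {p : Prop} {W : ℕ → Set V}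
    (hW : ∀ i, W i ⊆ spineType G L s p True i) {i : ℕ} {u : V}
    (hu : u ∈ classOf G W (freeType G L s True) i) : OddBelow G L i u (s i) := by
  cases i with
  | zero => exact (hW 0 hu).elim
  | succ j =>
    rcases hu with hu | ⟨hu, -⟩
    · exact OddBelow.of_adj ((hW _ hu).2.2.2 trivial).symm
    · exact hu.2.2 trivial

theorem even_not_adj (h : SpinedLevels G t L s) {j : ℕ} {u v : V} (hj : j + 1 ≤ t)
    (hu : u ∈ freeType G L s False (j + 1)) (hv : v ∈ spineType G L s True False (j + 1)) :
    ¬ G.Adj u v := by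
  intro huv
  obtain ⟨⟨huL, hu1, hu2⟩, huo⟩ := hu
  obtain ⟨hvL, hv1, hv2⟩ := hv
  rw [iff_false] at hu1 hu2 huo hv2
  rw [iff_true] at hv1
  have hus := h.ne_spine hj hu1
  refine huo ((h.oddBelow_iff_level hj huL (h.spine_mem hj) hus (fun hh => hu2 hh.symm)
    (IndPath.three huv hv1.symm (h.spine_adj hj) hus (fun hh => hu2 hh.symm)
      (fun hh => hu1 hh.symm) (fun hh => hv2 hh.symm) ⟨j + 1, by omega, hvL⟩
      ⟨j, by omega, h.spine_mem (by omega)⟩)).2 (by decide))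

theorem isSpineClass_even (h : SpinedLevels G t L s) :
    IsSpineClass G t L (evenAttached G L s) (freeType G L s False) False where
  attached_mem {i u} hi hu := by
    cases i with
    | zero =>
      obtain rfl : u = s 0 := hu
      exact h.spine_mem hi
    | succ j => exact hu.1
  free_mem {i u} hi hu := by
    cases i with
    | zero => exact hu.1.elim
    | succ j => exact hu.1.1
  attached_even {i u v} hi hu hv huv := by
    cases i with
    | zero =>
      obtain rfl : u = s 0 := hu
      obtain rfl : v = s 0 := hv
      exact OddBelow.irrefl
    | succ j =>
      exact h.not_oddBelow_of_common (by omega) hu.1 hv.1 huv (h.spine_mem (by omega))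
        (hu.2.1.2 trivial) (hv.2.1.2 trivial)
  not_adj hj hu hv := h.even_not_adj hj hu hv
  join {j u v w} hj hu hw hwu hv := by
    have hjt : j ≤ t := by omega
    rw [iff_false]
    have hnw := h.not_oddBelow_of_mem_even hjt hw
    have hwL : w ∈ L j := by
      cases j with
      | zero =>
        obtain rfl : w = s 0 := hw
        exact h.spine_mem hjt
      | succ j =>
        rcases hw with hw | hw
        · exact hw.1
        · exact hw.1.1.1
    have hvu : ¬ G.Adj v u := fun hh => h.even_not_adj hj hu hv hh.symm
    have hsv := hv.2.1.2 trivial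
    by_cases hwv : G.Adj w v
    · exact h.not_oddBelow_of_common hjt hv.1 hu.1.1 hvu hwL hwv hwu
    · rw [h.oddBelow_lift hjt hv.1 hu.1.1 hvu (h.spine_mem hjt) hwL hsv hwu hu.1.2.1.1 hwv]
      exact fun hh => hnw hh.symm
  same_parents := h.free_same_parents
  common {j} _ := ⟨s j, fun w hw => hw.2.1.2 trivial⟩

theorem odd_not_adj (h : SpinedLevels G t L s) {j : ℕ} {u v : V} (hj : j + 1 ≤ t)
    (hu : u ∈ freeType G L s True (j + 1)) (hvL : v ∈ L (j + 1)) (hv : G.Adj (s (j + 1)) v) :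
    ¬ G.Adj u v := by
  intro huv
  obtain ⟨⟨huL, hu1, hu2⟩, huo⟩ := hu
  rw [iff_false] at hu2
  rw [iff_true] at huo
  exact h.not_oddBelow_of_common_level hj huL (h.spine_mem hj) hvL huv hv.symm
    (fun hh => hu2 hh.symm) huo

theorem isSpineClass_odd (h : SpinedLevels G t L s) {p : Prop} {W : ℕ → Set V} {δ : Prop}
    (hW : ∀ i, W i ⊆ spineType G L s p True i)
    (hjoin : ∀ {j u v w}, j + 1 ≤ t → u ∈ freeType G L s True (j + 1) →
      w ∈ classOf G W (freeType G L s True) j → w ∈ L j → OddBelow G L j w (s j) → G.Adj w u →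
      v ∈ W (j + 1) → ¬ G.Adj v u → (OddBelow G L (j + 1) v u ↔ δ)) :
    IsSpineClass G t L W (freeType G L s True) δ where
  attached_mem {i u} hi hu := by
    cases i with
    | zero => exact (hW 0 hu).elim
    | succ j => exact (hW _ hu).1
  free_mem {i u} hi hu := by
    cases i with
    | zero => exact hu.1.elim
    | succ j => exact hu.1.1
  attached_even {i u v} hi hu hv huv := by
    cases i with
    | zero => exact (hW 0 hu).elim
    | succ j =>
      exact h.not_oddBelow_of_common_level hi (hW _ hu).1 (hW _ hv).1 (h.spine_mem hi)
        ((hW _ hu).2.2.2 trivial).symm ((hW _ hv).2.2.2 trivial) huv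
  not_adj {j u v} hj hu hv := h.odd_not_adj hj hu (hW _ hv).1 ((hW _ hv).2.2.2 trivial)
  join {j u v w} hj hu hw hwu hv := by
    refine hjoin hj hu hw ?_ (oddBelow_of_mem_odd hW hw) hwu hv fun hh =>
      h.odd_not_adj hj hu (hW _ hv).1 ((hW _ hv).2.2.2 trivial) hh.symm
    cases j with
    | zero => exact (hW 0 hw).elim
    | succ j =>
      rcases hw with hw | hw
      · exact (hW _ hw).1
      · exact hw.1.1.1
  same_parents := h.free_same_parents
  common {j} _ := ⟨s (j + 1), fun w hw => (hW _ hw).2.2.2 trivial⟩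

theorem isSpineClass_side (h : SpinedLevels G t L s) :
    IsSpineClass G t L (spineType G L s False True) (freeType G L s True) False := by
  refine h.isSpineClass_odd (fun i => subset_rfl) ?_
  intro j u v w hj hu hw hwL how hwu hv hvu
  rw [iff_false]
  have hjt : j ≤ t := by omega
  obtain ⟨hvL, hv1, hv2⟩ := hv
  rw [iff_false] at hv1
  rw [iff_true] at hv2
  by_cases hwv : G.Adj w v
  · exact h.not_oddBelow_of_common hjt hvL hu.1.1 hvu hwL hwv hwu
  · obtain ⟨l, hl, hpar⟩ := h.exists_indPath_spine hj hu.1 hwL hwu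
    have hodd : Odd l := hpar.1 (hu.2.2 trivial)
    have hlev : ∀ x ∈ L j, v ≠ x := by
      rintro x hx rfl
      have := h.disj hx hvL
      omega
    have hne : v ≠ u := by
      rintro rfl
      exact hwv hwu
    have hsub := insert_below_subset hwL (h.spine_mem (i := j) (by omega))
    have hP : IndPath G (below L (j + 1 + 1)) (l + 1) v u := by
      refine hl.symm.cons (hsub.trans (below_mono L (by omega)))
        ⟨j + 1, by omega, h.spine_mem hj⟩ hv2.symm hne hvu ?_
      rintro q (rfl | rfl | hq)
      · exact ⟨hlev _ hwL, fun hh => hwv hh.symm⟩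
      · exact ⟨hlev _ (h.spine_mem (by omega)), fun hh => hv1 hh.symm⟩
      · exact h.not_adj_below hvL hq
    rw [h.oddBelow_iff_level hj hvL hu.1.1 hne hvu hP]
    simp [parity_simps, hodd]

theorem isSpineClass_both (h : SpinedLevels G t L s) (ε : ℕ) :
    IsSpineClass G t L (bothAttached G L s ε) (freeType G L s True) True := by
  refine h.isSpineClass_odd (fun i u hu => hu.1) ?_
  intro j u v w hj hu hw hwL how hwu hv hvu
  rw [iff_true]
  have hjt : j ≤ t := by omega
  obtain ⟨⟨hvL, hv1, hv2⟩, hε⟩ := hv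
  rw [iff_true] at hv1 hv2
  have hws : ¬ G.Adj w (s j) := by
    cases j with
    | zero => exact hw.1.elim
    | succ j =>
      rcases hw with hw | hw
      · have := hw.2
        omega
      · exact fun hh => hw.1.1.2.2.1 hh.symm
  have hwv : ¬ G.Adj w v := fun hh => hws (h.adj_of_common_child hvL hh hv1 how)
  exact (h.oddBelow_lift hjt hvL hu.1.1 hvu (h.spine_mem hjt) hwL hv1 hwu hu.1.2.1.1 hwv).2
    how.symm

theorem class_cover (h : SpinedLevels G t L s) (i : ℕ) : i ≤ t → ∀ u ∈ L i,
    u ∈ classOf G (evenAttached G L s) (freeType G L s False) i ∨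
    u ∈ classOf G (spineType G L s False True) (freeType G L s True) i ∨
    u ∈ classOf G (bothAttached G L s 0) (freeType G L s True) i ∨
    u ∈ classOf G (bothAttached G L s 1) (freeType G L s True) i := by
  induction i with
  | zero =>
    intro _ u hu
    exact Or.inl (h.zero u hu)
  | succ j ih =>
    intro hj u hu
    by_cases h1 : G.Adj (s j) u
    · by_cases h2 : G.Adj (s (j + 1)) u
      · rcases Nat.mod_two_eq_zero_or_one (j + 1) with hε | hε
        · exact Or.inr (Or.inr (Or.inl (Or.inl ⟨⟨hu, by simpa using h1, by simpa using h2⟩, hε⟩)))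
        · exact Or.inr (Or.inr (Or.inr (Or.inl ⟨⟨hu, by simpa using h1, by simpa using h2⟩, hε⟩)))
      · exact Or.inl (Or.inl ⟨hu, by simpa using h1, by simpa using h2⟩)
    · by_cases h2 : G.Adj (s (j + 1)) u
      · exact Or.inr (Or.inl (Or.inl ⟨hu, by simpa using h1, by simpa using h2⟩))
      · have hfree : u ∈ spineType G L s False False (j + 1) :=
          ⟨hu, by simpa using h1, by simpa using h2⟩
        obtain ⟨w, hw, hwu⟩ := h.parent (by omega) hu
        have hpar := h.oddBelow_spine hj hfree hw hwu
        have hodd : OddBelow G L j w (s j) → u ∈ freeType G L s True (j + 1) := fun hh =>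
          ⟨hfree, by rw [iff_true, hpar]; exact hh⟩
        rcases ih (by omega) w hw with hc | hc | hc | hc
        · have hn := h.not_oddBelow_of_mem_even (by omega) hc
          exact Or.inl (Or.inr ⟨⟨hfree, by rw [iff_false, hpar]; exact hn⟩, w, hc, hwu⟩)
        · exact Or.inr (Or.inl (Or.inr ⟨hodd (oddBelow_of_mem_odd (fun i => subset_rfl) hc),
            w, hc, hwu⟩))
        · exact Or.inr (Or.inr (Or.inl (Or.inr ⟨hodd (oddBelow_of_mem_odd
            (fun i u hu => hu.1) hc), w, hc, hwu⟩)))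
        · exact Or.inr (Or.inr (Or.inr (Or.inr ⟨hodd (oddBelow_of_mem_odd
            (fun i u hu => hu.1) hc), w, hc, hwu⟩)))

theorem colOn_above (h : SpinedLevels G t L s) {k n : ℕ}
    (hG : G.CliqueFree (k + 3)) (hn : ∀ S, NoCliqueIn G S (k + 2) → ColOn G S n) {C : Set V}
    (hC : ∀ d ∈ below L (t + 1), ∀ y ∈ C, d ≠ y ∧ ¬ G.Adj d y)
    (hCL : ∀ y ∈ C, ∃ a ∈ L (t + 1), G.Adj a y) :
    ColOn G C (4 * (2 ^ k * (2 ^ (k + 1) * n) * (2 ^ (k + 1) * n))) := by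
  let K : ℕ → Set V := fun c => match c with
    | 0 => classOf G (evenAttached G L s) (freeType G L s False) t
    | 1 => classOf G (spineType G L s False True) (freeType G L s True) t
    | 2 => classOf G (bothAttached G L s 0) (freeType G L s True) t
    | _ => classOf G (bothAttached G L s 1) (freeType G L s True) t
  refine ColOn.of_cover
    (fun c => {y | y ∈ C ∧ ∃ a ∈ L (t + 1), G.Adj a y ∧ ∃ x ∈ K c, G.Adj x a}) ?_ ?_
  · intro y hy
    obtain ⟨a, ha, hay⟩ := hCL y hy
    obtain ⟨x, hx, hxa⟩ := h.parent le_rfl ha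
    rcases h.class_cover t le_rfl x hx with hc | hc | hc | hc
    · exact ⟨0, by omega, hy, a, ha, hay, x, hc, hxa⟩
    · exact ⟨1, by omega, hy, a, ha, hay, x, hc, hxa⟩
    · exact ⟨2, by omega, hy, a, ha, hay, x, hc, hxa⟩
    · exact ⟨3, by omega, hy, a, ha, hay, x, hc, hxa⟩
  · intro c hc
    interval_cases c
    · exact h.isSpineClass_even.colOn_above h hG hn hC
    · exact h.isSpineClass_side.colOn_above h hG hn hC
    · exact (h.isSpineClass_both 0).colOn_above h hG hn hC
    · exact (h.isSpineClass_both 1).colOn_above h hG hn hC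

end SpinedLevels

/-- `M` is a minimal set whose neighbours cover `T`. -/
def IsMinimalCover (G : SimpleGraph V) (M T : Set V) : Prop :=
  (∀ u ∈ T, ∃ w ∈ M, G.Adj w u) ∧
    ∀ w ∈ M, ∃ u ∈ T, G.Adj w u ∧ ∀ x ∈ M, G.Adj x u → x = w

theorem exists_isMinimalCover [Finite V] (G : SimpleGraph V) {P T : Set V}
    (h : ∀ u ∈ T, ∃ w ∈ P, G.Adj w u) : ∃ M ⊆ P, IsMinimalCover G M T := by
  obtain ⟨M, hM⟩ := (Set.toFinite {M : Set V | M ⊆ P ∧ ∀ u ∈ T, ∃ w ∈ M, G.Adj w u}).exists_minimal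
    ⟨P, subset_rfl, h⟩
  refine ⟨M, hM.prop.1, hM.prop.2, ?_⟩
  intro w hw
  by_contra! hcon
  have hsub : M \ {w} ⊆ M := Set.sdiff_subset
  have := hM.le_of_le ⟨hsub.trans hM.prop.1, fun u hu => by
    obtain ⟨x, hx, hxu⟩ := hM.prop.2 u hu
    by_cases hxw : x = w
    · obtain ⟨y, hy, hyu, hyw⟩ := hcon u hu (hxw ▸ hxu)
      exact ⟨y, ⟨hy, hyw⟩, hyu⟩
    · exact ⟨x, ⟨hx, hxw⟩, hxu⟩⟩ hsub hw
  exact this.2 rfl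

theorem exists_cover_levels [Finite V] {G : SimpleGraph V} {lev : V → ℕ} (hl : IsLevelFun G lev)
    (n : ℕ) : ∀ A : Set V, (∀ u ∈ A, lev u = n) → ∃ L : ℕ → Set V, L n = A ∧
      (∀ i, ∀ u ∈ L i, lev u = i) ∧ ∀ i < n, IsMinimalCover G (L i) (L (i + 1)) := by
  induction n with
  | zero =>
    intro A hA
    refine ⟨fun i => {u | u ∈ A ∧ lev u = i}, ?_, fun i u hu => hu.2, by simp⟩
    ext u
    exact ⟨fun hu => hu.1, fun hu => ⟨hu, hA u hu⟩⟩
  | succ n ih =>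
    intro A hA
    obtain ⟨M, hM, hcov⟩ := exists_isMinimalCover G (P := {w | lev w = n}) (T := A)
      (fun u hu => by
        obtain ⟨p, hp, hpl⟩ := hl.parent (hA u hu)
        exact ⟨p, hpl, hp⟩)
    obtain ⟨L, hLn, hlev, hL⟩ := ih M hM
    refine ⟨Function.update L (n + 1) A, by simp, ?_, ?_⟩
    · intro i u hu
      by_cases hi : i = n + 1
      · subst hi
        rw [Function.update_self] at hu
        exact hA u hu
      · rw [Function.update_of_ne hi] at hu
        exact hlev i u hu
    · intro i hi
      rw [Function.update_of_ne (show i ≠ n + 1 by omega)]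
      by_cases hin : i = n
      · subst hin
        rw [Function.update_self, hLn]
        exact hcov
      · rw [Function.update_of_ne (show i + 1 ≠ n + 1 by omega)]
        exact hL i (by omega)

/-- Levels below the component `C` of a level of a levelling of `G`. -/
structure CoverLevels (G : SimpleGraph V) (lev : V → ℕ) (t : ℕ) (c : V) (C : Set V)
    (L : ℕ → Set V) : Prop where
  mem : c ∈ C
  connected : ∀ v ∈ C, (restrictTo G C).Reachable c v
  lev_top : ∀ v ∈ C, lev v = t + 2
  lev_eq : ∀ i, ∀ u ∈ L i, lev u = i
  cover : ∀ i < t + 1, IsMinimalCover G (L i) (L (i + 1))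
  top : ∀ u ∈ L (t + 1), ∃ v ∈ C, G.Adj u v
  cover_top : ∀ v ∈ C, ∃ u ∈ L (t + 1), G.Adj u v

namespace CoverLevels

variable {G : SimpleGraph V} {lev : V → ℕ} {t : ℕ} {c : V} {C : Set V} {L : ℕ → Set V}

theorem lev_of_below (h : CoverLevels G lev t c C L) {i : ℕ} {p : V} (hp : p ∈ below L i) :
    lev p < i := by
  obtain ⟨j, hj, hp⟩ := hp
  rwa [h.lev_eq j p hp]

theorem exists_upper (h : CoverLevels G lev t c C L) (hl : IsLevelFun G lev) (d : ℕ) :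
    ∀ i, i + d = t + 1 → ∀ u ∈ L i, ∃ B : Set V, C ⊆ B ∧
      (∀ x ∈ B, (restrictTo G (insert u B)).Reachable u x) ∧
      ∀ p ∈ below L (min (i + 1) (t + 1)), p ≠ u → ∀ q ∈ B, p ≠ q ∧ ¬ G.Adj p q := by
  induction d with
  | zero =>
    intro i hi u hu
    obtain rfl : i = t + 1 := by omega
    obtain ⟨v, hv, huv⟩ := h.top u hu
    refine ⟨C, subset_rfl, fun x hx => ?_, fun p hp _ q hq => ?_⟩
    · have huv' : (restrictTo G (insert u C)).Adj u v := ⟨huv, Or.inl rfl, Or.inr hv⟩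
      exact huv'.reachable.trans (((h.connected v hv).symm.trans (h.connected x hx)).mono
        (restrictTo_mono G (Set.subset_insert _ _)))
    · have h1 := h.lev_of_below hp
      have h2 := h.lev_top q hq
      exact hl.not_adj (by omega)
  | succ d ih =>
    intro i hi u hu
    obtain ⟨w, hw, huw, huniq⟩ := (h.cover i (by omega)).2 u hu
    obtain ⟨B, hCB, hconn, hanti⟩ := ih (i + 1) (by omega) w hw
    refine ⟨insert w B, hCB.trans (Set.subset_insert _ _), ?_, ?_⟩
    · have huw' : (restrictTo G (insert u (insert w B))).Adj u w :=
        ⟨huw, Or.inl rfl, Or.inr (Or.inl rfl)⟩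
      rintro x (rfl | hx)
      · exact huw'.reachable
      · exact huw'.reachable.trans ((hconn x hx).mono
          (restrictTo_mono G (Set.subset_insert _ _)))
    · intro p hp hpu q hq
      have hpl := h.lev_of_below hp
      have hwl := h.lev_eq _ w hw
      have hpw : p ≠ w := by
        rintro rfl
        omega
      rcases hq with rfl | hq
      · refine ⟨hpw, fun hpq => ?_⟩
        obtain ⟨j, hj, hpj⟩ := hp
        have h1 := hl.le_succ hpq
        have h2 := h.lev_eq _ p hpj
        obtain rfl : j = i := by omega
        exact hpu (huniq p hpj hpq)
      · exact hanti p (below_mono L (by omega) hp) hpw q hq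

theorem reachable (h : CoverLevels G lev t c C L) (hl : IsLevelFun G lev) {i : ℕ}
    (hi : i ≤ t + 1) {u : V} (hu : u ∈ L i) : G.Reachable u c := by
  obtain ⟨B, hCB, hconn, -⟩ := h.exists_upper hl (t + 1 - i) i (by omega) u hu
  exact (hconn c (hCB h.mem)).mono (restrictTo_le G _)

theorem parity (h : CoverLevels G lev t c C L) (hl : IsLevelFun G lev) (hG : OddHoleFree G)
    {i l m : ℕ} (hi : i ≤ t + 1) {u v : V} (hu : u ∈ L i) (hv : v ∈ L i) (huv : u ≠ v)
    (hnuv : ¬ G.Adj u v) (hP : IndPath G (below L (min (i + 1) (t + 1))) l u v)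
    (hQ : IndPath G (below L (min (i + 1) (t + 1))) m u v) : Even (l + m) := by
  obtain ⟨B, hCB, hconn, hanti⟩ := h.exists_upper hl (t + 1 - i) i (by omega) u hu
  obtain ⟨B', hCB', hconn', hanti'⟩ := h.exists_upper hl (t + 1 - i) i (by omega) v hv
  obtain ⟨q, hq⟩ : ∃ q, IndPath G (B ∪ B') q u v := by
    apply exists_indPath_of_reachable huv
    refine ((hconn c (hCB h.mem)).mono (restrictTo_mono G ?_)).trans
      ((hconn' c (hCB' h.mem)).mono (restrictTo_mono G ?_)).symm
    · exact Set.insert_subset_insert (Set.subset_union_left.trans (Set.subset_insert _ _))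
    · exact (Set.insert_subset_insert Set.subset_union_right).trans (Set.subset_insert _ _)
  have hST : ∀ p ∈ below L (min (i + 1) (t + 1)), p ≠ u → p ≠ v →
      ∀ z ∈ B ∪ B', p ≠ z ∧ ¬ G.Adj p z := by
    rintro p hp hpu hpv z (hz | hz)
    · exact hanti p hp hpu z hz
    · exact hanti' p hp hpv z hz
  have h1 := hP.even_add hG hq huv hnuv hST
  have h2 := hQ.even_add hG hq huv hnuv hST
  rw [Nat.even_iff] at *
  omega

theorem exists_spinedLevels (h : CoverLevels G lev t c C L) (hl : IsLevelFun G lev)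
    (hG : OddHoleFree G) : ∃ s, SpinedLevels G t L s := by
  classical
  have hne : ∀ d i, i + d = t + 1 → (L i).Nonempty := by
    intro d
    induction d with
    | zero =>
      intro i hi
      obtain rfl : i = t + 1 := by omega
      obtain ⟨u, hu, -⟩ := h.cover_top c h.mem
      exact ⟨u, hu⟩
    | succ d ih =>
      intro i hi
      obtain ⟨u, hu⟩ := ih (i + 1) (by omega)
      obtain ⟨w, hw, -⟩ := (h.cover i (by omega)).1 u hu
      exact ⟨w, hw⟩
  obtain ⟨r, hr⟩ := hne (t + 1) 0 (by omega)
  have hdep : ∀ i w, ∃ u, i < t + 1 → w ∈ L i →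
      u ∈ L (i + 1) ∧ G.Adj w u ∧ ∀ x ∈ L i, G.Adj x u → x = w := by
    intro i w
    by_cases hiw : i < t + 1 ∧ w ∈ L i
    · obtain ⟨u, hu⟩ := (h.cover i hiw.1).2 w hiw.2
      exact ⟨u, fun _ _ => hu⟩
    · exact ⟨w, fun h1 h2 => absurd ⟨h1, h2⟩ hiw⟩
  choose dep hdep using hdep
  let s : ℕ → V := fun i => Nat.rec r (fun i w => dep i w) i
  have hs : ∀ i, i ≤ t + 1 → s i ∈ L i := by
    intro i
    induction i with
    | zero => exact fun _ => hr
    | succ i ih => exact fun hi => (hdep i (s i) (by omega) (ih (by omega))).1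
  refine ⟨s, hG, ?_, ?_, ?_, ?_, ?_, ?_, ?_, ?_⟩
  · intro i j u hi hj
    exact (h.lev_eq i u hi).symm.trans (h.lev_eq j u hj)
  · intro i j u v hu hv huv
    rw [← h.lev_eq i u hu, ← h.lev_eq j v hv]
    exact hl.le_succ huv
  · intro u hu
    exact hl.root_unique ((h.reachable hl (by omega) hu).trans (h.reachable hl (by omega) hr).symm)
      (h.lev_eq 0 u hu) (h.lev_eq 0 r hr)
  · intro i u hi hu
    exact (h.cover i (by omega)).1 u hu
  · intro i hi
    exact hs i (by omega)
  · intro i hi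
    exact (hdep i (s i) (by omega) (hs i (by omega))).2.1
  · intro i w hi hw hws
    exact (hdep i (s i) (by omega) (hs i (by omega))).2.2 w hw hws
  · intro i u v l m hi hu hv huv hnuv hP hQ
    exact h.parity hl hG hi hu hv huv hnuv hP hQ

end CoverLevels

/-- The number of colours used in one step of the induction on the clique number. -/
def levelBound (k n : ℕ) : ℕ := 4 * (2 ^ k * (2 ^ (k + 1) * n) * (2 ^ (k + 1) * n))

theorem le_levelBound {k n : ℕ} (hn : 1 ≤ n) : n ≤ levelBound k n := by
  have h : 1 ≤ 4 * 2 ^ k * 2 ^ (k + 1) * n * 2 ^ (k + 1) := by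
    have := Nat.one_le_two_pow (n := k)
    have := Nat.one_le_two_pow (n := k + 1)
    have : 0 < 4 * 2 ^ k * 2 ^ (k + 1) * n * 2 ^ (k + 1) := by positivity
    omega
  calc n = 1 * n := (one_mul n).symm
    _ ≤ 4 * 2 ^ k * 2 ^ (k + 1) * n * 2 ^ (k + 1) * n := Nat.mul_le_mul_right n h
    _ = levelBound k n := by
      unfold levelBound
      ring

theorem colOn_level [Finite V] {G : SimpleGraph V} {lev : V → ℕ} (hl : IsLevelFun G lev)
    (hG : OddHoleFree G) {k n : ℕ} (hclq : G.CliqueFree (k + 3)) (hn1 : 1 ≤ n)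
    (hn : ∀ S, NoCliqueIn G S (k + 2) → ColOn G S n) (i : ℕ) :
    ColOn G {v | lev v = i} (levelBound k n) := by
  have hle := le_levelBound (k := k) hn1
  have hsub : ∀ {c v : V}, v ∈ ColOn.component G {v | lev v = i} c → G.Reachable c v :=
    fun hv => Reachable.mono (restrictTo_le G _) hv
  rcases i with _ | _ | t
  · refine ColOn.mono_num (m := 1) ⟨fun _ => 0, by simp, ?_⟩ (hn1.trans hle)
    intro u hu v hv huv
    exact absurd (hl.root_unique huv.reachable hu hv) huv.ne
  · refine (ColOn.of_components fun c hc => hn _ ?_).mono_num hle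
    obtain ⟨p, hpc, hp⟩ := hl.parent hc
    refine NoCliqueIn.of_common_neighbor hclq (x := p) fun v hv => ?_
    obtain ⟨q, hqv, hq⟩ := hl.parent (ColOn.component_subset hc hv)
    rwa [hl.root_unique ((hpc.reachable.trans (hsub hv)).trans hqv.symm.reachable) hp hq]
  · refine ColOn.of_components fun c hc => ?_
    set C := ColOn.component G {v | lev v = t + 1 + 1} c with hC
    have hlevC : ∀ v ∈ C, lev v = t + 2 := fun v hv => ColOn.component_subset hc hv
    obtain ⟨L, hLA, hlev, hcov⟩ := exists_cover_levels hl (t + 1)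
      {u | lev u = t + 1 ∧ ∃ v ∈ C, G.Adj u v} (fun u hu => hu.1)
    have hcl : CoverLevels G lev t c C L :=
      { mem := Reachable.refl c
        connected := fun v hv => ColOn.component_connected hv
        lev_top := hlevC
        lev_eq := hlev
        cover := hcov
        top := fun u hu => by
          rw [hLA] at hu
          exact hu.2
        cover_top := fun v hv => by
          obtain ⟨p, hpv, hp⟩ := hl.parent (hlevC v hv)
          rw [hLA]
          exact ⟨p, ⟨hp, v, hv, hpv⟩, hpv⟩ }
    obtain ⟨s, hs⟩ := hcl.exists_spinedLevels hl hG
    refine hs.colOn_above hclq hn (fun d hd y hy => ?_) hcl.cover_top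
    have h1 := hcl.lev_of_below hd
    have h2 := hlevC y hy
    exact hl.not_adj (by omega)

theorem colorable_of_levels {G : SimpleGraph V} {lev : V → ℕ} (hl : IsLevelFun G lev) {M : ℕ}
    (h : ∀ i, ColOn G {v | lev v = i} M) : G.Colorable (2 * M) := by
  choose c hc using h
  have hcol : G.Coloring (Fin 2 × Fin M) := Coloring.mk
    (fun v => (⟨lev v % 2, by omega⟩, ⟨c (lev v) v, (hc _).1 v rfl⟩)) fun {a b} hab heq => by
      simp only [Prod.mk.injEq, Fin.mk.injEq] at heq
      by_cases hlab : lev a = lev b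
      · rw [hlab] at heq
        exact (hc _).2 a hlab b rfl hab heq.2
      · have h1 := hl.le_succ hab
        have h2 := hl.le_succ hab.symm
        omega
  simpa using hcol.colorable

theorem OddHoleFree.restrictTo {G : SimpleGraph V} (hG : OddHoleFree G) (S : Set V) :
    OddHoleFree (restrictTo G S) := by
  intro N f hodd h5 hf
  have hmem : ∀ i < N, f i ∈ S := by
    intro i hi
    by_cases hi' : i + 1 < N
    · exact ((hf i (i + 1) (by omega) hi').2.2 (Or.inl rfl)).2.1
    · exact ((hf (i - 1) i (by omega) hi).2.2 (Or.inl (by omega))).2.2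
  refine hG N f hodd h5 fun i j hij hj => ⟨(hf i j hij hj).1, ?_⟩
  rw [← (hf i j hij hj).2]
  exact ⟨fun hh => ⟨hh, hmem i (by omega), hmem j hj⟩, fun hh => hh.1⟩

/-- The number of colours that suffices for clique number `k + 1`. -/
def colorBound : ℕ → ℕ
  | 0 => 1
  | k + 1 => 2 * levelBound k (colorBound k)

theorem colorBound_mul (k : ℕ) : colorBound k * 2 ^ (3 * k + 8) = 2 ^ 2 ^ (k + 3) := by
  induction k with
  | zero => norm_num [colorBound]
  | succ k ih =>
    calc colorBound (k + 1) * 2 ^ (3 * (k + 1) + 8)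
        = (colorBound k * 2 ^ (3 * k + 8)) ^ 2 := by
          rw [colorBound, levelBound]
          ring
      _ = 2 ^ 2 ^ (k + 1 + 3) := by
          rw [ih, ← pow_mul, ← pow_succ]

theorem one_le_colorBound (k : ℕ) : 1 ≤ colorBound k := by
  by_contra h
  have h0 : colorBound k = 0 := by omega
  have := colorBound_mul k
  rw [h0, zero_mul] at this
  exact absurd this.symm (by positivity)

theorem colorable_of_cliqueFree [Finite V] (k : ℕ) : ∀ G : SimpleGraph V, OddHoleFree G →
    G.CliqueFree (k + 2) → G.Colorable (colorBound k) := by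
  induction k with
  | zero =>
    intro G _ hG
    refine ⟨Coloring.mk (fun _ => ⟨0, one_le_colorBound 0⟩) fun {a b} hab => ?_⟩
    rw [cliqueFree_two] at hG
    simp [hG] at hab
  | succ k ih =>
    intro G hG hclq
    obtain ⟨lev, hl⟩ := exists_isLevelFun G
    refine colorable_of_levels hl
      (colOn_level hl hG hclq (one_le_colorBound k) fun S hS => ?_)
    refine ColOn.of_colorable (ih (restrictTo G S) (hG.restrictTo S) ?_)
      fun u hu v hv huv => ⟨huv, hu, hv⟩
    intro q hq
    refine hS q ?_ ⟨fun a ha b hb hab => (hq.isClique ha hb hab).1, hq.card_eq⟩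
    intro v hv
    obtain ⟨w, hw, hwv⟩ := Finset.exists_mem_ne (by rw [hq.card_eq]; omega) v
    exact (hq.isClique hv hw hwv.symm).2.1

theorem linear_le_two_pow (k : ℕ) : 48 * (k + 3) ≤ 2 ^ (3 * k + 8) := by
  induction k with
  | zero => norm_num
  | succ k ih =>
    have : 2 ^ (3 * (k + 1) + 8) = 8 * 2 ^ (3 * k + 8) := by ring
    omega

theorem stmt10 [Fintype V] (G : SimpleGraph V) (h : ¬ HasOddHole G) :
    ((48 * (G.cliqueNum + 2) : ℕ) : ℕ∞) * G.chromaticNumber ≤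
      ((2 ^ 2 ^ (G.cliqueNum + 2) : ℕ) : ℕ∞) := by
  classical
  have hfree : G.CliqueFree (G.cliqueNum + 1) := by
    intro q hq
    have := hq.isClique.card_le_cliqueNum
    rw [hq.card_eq] at this
    omega
  rcases hω : G.cliqueNum with _ | k
  · rw [hω, zero_add] at hfree
    have hempty : IsEmpty V := by
      refine ⟨fun v => hfree {v} ?_⟩
      simp
    rw [(chromaticNumber_eq_zero_iff).2 hempty, mul_zero]
    exact zero_le
  · rw [hω] at hfree
    have hcol := colorable_of_cliqueFree k G (oddHoleFree_of_not_hasOddHole h) hfree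
    calc ((48 * (k + 1 + 2) : ℕ) : ℕ∞) * G.chromaticNumber
        ≤ ((48 * (k + 1 + 2) : ℕ) : ℕ∞) * (colorBound k : ℕ∞) := by
          gcongr
          exact hcol.chromaticNumber_le
      _ ≤ ((2 ^ 2 ^ (k + 1 + 2) : ℕ) : ℕ∞) := by
          rw [← Nat.cast_mul, Nat.cast_le, ← colorBound_mul k, mul_comm]
          exact Nat.mul_le_mul_left _ (linear_le_two_pow k)
end

section
/- For every infinite set F ⊆ {3,4,…} there need not exist a χ-bound: there exists a set F of upper density 1 in the positive integers such that the family of graphs containing no induced cycle with length in F has unbounded chromatic number even restricted to triangle-free graphs. Concretely, given any function g, there is a sequence of triangle-free graphs (G_i) with χ(G_i) ≥ i such that the set of cycle lengths avoided as induced cycles by all G_i has upper density 1. -/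
open SimpleGraph

universe u

variable {V : Type u}

/-- The number of functions `ε → β` mapping the set `S` into `T`, as a fraction of all functions. -/
theorem card_filter_forall_mem {ε β : Type*} [Fintype ε] [DecidableEq ε] [Fintype β]
    [DecidableEq β] (S : Finset ε) (T : Finset β) :
    (Finset.univ.filter fun ω : ε → β => ∀ e ∈ S, ω e ∈ T).card * Fintype.card β ^ S.card =
      T.card ^ S.card * Fintype.card (ε → β) := by
  have h : (Finset.univ.filter fun ω : ε → β => ∀ e ∈ S, ω e ∈ T) =
      Fintype.piFinset fun e => if e ∈ S then T else Finset.univ := by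
    ext ω
    simp only [Finset.mem_filter, Finset.mem_univ, true_and, Fintype.mem_piFinset]
    refine forall_congr' fun e => ?_
    by_cases he : e ∈ S <;> simp [he]
  rw [h, Fintype.card_piFinset, Fintype.card_fun, ← Finset.card_univ (α := ε),
    ← Finset.prod_const (s := Finset.univ), ← Finset.prod_const (s := S),
    ← Finset.prod_const (s := S), ← Finset.prod_mul_prod_compl S,
    ← Finset.prod_mul_prod_compl S (fun _ => Fintype.card β)]
  have h₁ : ∏ e ∈ S, (if e ∈ S then T else Finset.univ).card = ∏ e ∈ S, T.card :=
    Finset.prod_congr rfl fun e he => by rw [if_pos he]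
  have h₂ : ∏ e ∈ Sᶜ, (if e ∈ S then T else Finset.univ).card = ∏ e ∈ Sᶜ, Fintype.card β :=
    Finset.prod_congr rfl fun e he => by
      rw [if_neg (Finset.mem_compl.mp he), Finset.card_univ]
  rw [h₁, h₂]
  ring

theorem card_finsetWalkLength_succ_le {α : Type*} [Fintype α] [DecidableEq α]
    (G : SimpleGraph α) [DecidableRel G.Adj] (l : ℕ) (u v : α) :
    (G.finsetWalkLength (l + 1) u v).card ≤ Fintype.card α ^ l := by
  induction l generalizing u with
  | zero =>
    rw [pow_zero, Finset.card_le_one]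
    intro p hp q hq
    rw [mem_finsetWalkLength_iff] at hp hq
    cases p with
    | nil => simp at hp
    | cons h p =>
      cases q with
      | nil => simp at hq
      | cons h' q =>
        cases p with
        | cons _ _ => simp at hp
        | nil =>
          cases q with
          | cons _ _ => simp at hq
          | nil => rfl
  | succ l ih =>
    rw [finsetWalkLength]
    refine Finset.card_biUnion_le.trans ?_
    simp only [Finset.card_map]
    refine (Finset.sum_le_card_nsmul _ _ _ fun w _ => ih _).trans ?_
    rw [smul_eq_mul, pow_succ']
    refine Nat.mul_le_mul_right _ ?_
    rw [Finset.card_univ]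
    exact Fintype.card_subtype_le _

/-- The graph whose edges are the nonloops labelled `0` by `ω`. -/
def zeroLabelGraph {α : Type*} {m : ℕ} (ω : Sym2 α → Fin (m + 1)) : SimpleGraph α where
  Adj u v := u ≠ v ∧ ω s(u, v) = 0
  symm := ⟨fun u v h => ⟨h.1.symm, by rw [Sym2.eq_swap]; exact h.2⟩⟩
  loopless := ⟨fun _ h => h.1 rfl⟩

/-- The vertices lying on a cycle of length at most `g`. -/
def shortCycleVertices {α : Type*} (G : SimpleGraph α) (g : ℕ) : Set α :=
  {v | ∃ p : G.Walk v v, p.IsCycle ∧ p.length ≤ g}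

open Classical in
theorem card_labels_mem_shortCycleVertices_le {α : Type*} [Fintype α] (m g : ℕ) (v : α) :
    ((Finset.univ.filter fun ω : Sym2 α → Fin (m + 1) =>
        v ∈ shortCycleVertices (zeroLabelGraph ω) g).card : ℝ) ≤
      ∑ l ∈ Finset.range g, (Fintype.card α : ℝ) ^ l *
        (Fintype.card (Sym2 α → Fin (m + 1)) / ((m : ℝ) + 1) ^ (l + 1)) := by
  set E := fun p : (⊤ : SimpleGraph α).Walk v v =>
    Finset.univ.filter fun ω : Sym2 α → Fin (m + 1) =>
      ∀ e ∈ p.edges.toFinset, ω e ∈ ({0} : Finset (Fin (m + 1))) with hE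
  set P := fun l : ℕ =>
    ((⊤ : SimpleGraph α).finsetWalkLength (l + 1) v v).filter fun p => p.IsTrail with hP
  have hsub : (Finset.univ.filter fun ω : Sym2 α → Fin (m + 1) =>
      v ∈ shortCycleVertices (zeroLabelGraph ω) g) ⊆
      (Finset.range g).biUnion fun l => (P l).biUnion E := by
    intro ω hω
    obtain ⟨p, hp, hpg⟩ := (Finset.mem_filter.mp hω).2
    have h3 := hp.three_le_length
    simp only [Finset.mem_biUnion, Finset.mem_range]
    refine ⟨p.length - 1, by omega, p.mapLe le_top, ?_, ?_⟩
    · rw [hP, Finset.mem_filter, mem_finsetWalkLength_iff]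
      refine ⟨?_, (hp.mapLe le_top).isTrail⟩
      rw [Walk.mapLe, Walk.length_map]
      omega
    · simp only [hE, Finset.mem_filter, Finset.mem_univ, true_and, List.mem_toFinset,
        Walk.edges_mapLe_eq_edges, Finset.mem_singleton]
      intro e he
      have := p.edges_subset_edgeSet he
      induction e with
      | _ a b => exact this.2
  have hcard : ∀ l, ∀ p ∈ P l, ((E p).card : ℝ) =
      Fintype.card (Sym2 α → Fin (m + 1)) / ((m : ℝ) + 1) ^ (l + 1) := by
    intro l p hp
    obtain ⟨hl, ht⟩ := Finset.mem_filter.mp hp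
    rw [mem_finsetWalkLength_iff] at hl
    have h := card_filter_forall_mem p.edges.toFinset ({0} : Finset (Fin (m + 1)))
    rw [List.toFinset_card_of_nodup ht.edges_nodup, Walk.length_edges, hl, Fintype.card_fin,
      Finset.card_singleton, one_pow, one_mul] at h
    rw [eq_div_iff (by positivity)]
    exact_mod_cast h
  calc ((Finset.univ.filter fun ω : Sym2 α → Fin (m + 1) =>
        v ∈ shortCycleVertices (zeroLabelGraph ω) g).card : ℝ)
      ≤ ((∑ l ∈ Finset.range g, ∑ p ∈ P l, (E p).card : ℕ) : ℝ) := by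
        refine Nat.cast_le.mpr ((Finset.card_le_card hsub).trans ?_)
        exact Finset.card_biUnion_le.trans (Finset.sum_le_sum fun l _ => Finset.card_biUnion_le)
    _ = ∑ l ∈ Finset.range g, ((P l).card : ℝ) *
          (Fintype.card (Sym2 α → Fin (m + 1)) / ((m : ℝ) + 1) ^ (l + 1)) := by
        push_cast
        refine Finset.sum_congr rfl fun l _ => ?_
        rw [Finset.sum_congr rfl (hcard l), Finset.sum_const, nsmul_eq_mul]
    _ ≤ _ := by
        refine Finset.sum_le_sum fun l _ => mul_le_mul_of_nonneg_right ?_ (by positivity)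
        exact_mod_cast (Finset.card_filter_le _ _).trans (card_finsetWalkLength_succ_le _ l v v)

open Classical in
/-- The average number of vertices on short cycles is bounded independently of the number of
vertices, when the expected degree `D` is fixed. -/
theorem sum_card_shortCycleVertices_le {α : Type*} [Fintype α] (m g D : ℕ)
    (hα : Fintype.card α = D * (m + 1)) :
    ∑ ω : Sym2 α → Fin (m + 1),
        (Finset.univ.filter fun v => v ∈ shortCycleVertices (zeroLabelGraph ω) g).card ≤
      (∑ l ∈ Finset.range g, D ^ (l + 1)) * Fintype.card (Sym2 α → Fin (m + 1)) := by
  have hswap := Finset.sum_card_bipartiteAbove_eq_sum_card_bipartiteBelow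
    (s := (Finset.univ : Finset (Sym2 α → Fin (m + 1)))) (t := (Finset.univ : Finset α))
    (fun ω v => v ∈ shortCycleVertices (zeroLabelGraph ω) g)
  simp only [Finset.bipartiteAbove, Finset.bipartiteBelow] at hswap
  rw [hswap, ← Nat.cast_le (α := ℝ)]
  push_cast
  refine (Finset.sum_le_sum fun v _ => card_labels_mem_shortCycleVertices_le m g v).trans ?_
  rw [Finset.sum_const, Finset.card_univ, nsmul_eq_mul, Finset.mul_sum, Finset.sum_mul]
  refine Finset.sum_le_sum fun l _ => le_of_eq ?_
  rw [hα]
  push_cast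
  rw [mul_pow]
  field_simp
  ring

/-- All labellings for which some `t`-set is independent form a small proportion. -/
theorem card_labels_independent_mul_le {α : Type*} [Fintype α] [DecidableEq α] (m t : ℕ) :
    (Finset.univ.filter fun ω : Sym2 α → Fin (m + 1) =>
        ∃ S : Finset α, S.card = t ∧ ∀ e ∈ S.offDiag.image Sym2.mk.uncurry, ω e ≠ 0).card *
        (m + 1) ^ t.choose 2 ≤
      2 ^ Fintype.card α * (m ^ t.choose 2 * Fintype.card (Sym2 α → Fin (m + 1))) := by
  set E := fun S : Finset α => Finset.univ.filter fun ω : Sym2 α → Fin (m + 1) =>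
      ∀ e ∈ S.offDiag.image Sym2.mk.uncurry, ω e ∈ ({0} : Finset (Fin (m + 1)))ᶜ with hE
  set 𝒮 := (Finset.univ : Finset (Finset α)).filter fun S => S.card = t with h𝒮
  have hsub : (Finset.univ.filter fun ω : Sym2 α → Fin (m + 1) =>
        ∃ S : Finset α, S.card = t ∧ ∀ e ∈ S.offDiag.image Sym2.mk.uncurry, ω e ≠ 0) ⊆
      𝒮.biUnion E := by
    intro ω hω
    obtain ⟨S, hS, h⟩ := (Finset.mem_filter.mp hω).2
    rw [Finset.mem_biUnion]
    refine ⟨S, by simp [h𝒮, hS], ?_⟩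
    rw [hE, Finset.mem_filter]
    exact ⟨Finset.mem_univ _, fun e he => by simpa using h e he⟩
  have hcard : ∀ S ∈ 𝒮, (E S).card * (m + 1) ^ t.choose 2 =
      m ^ t.choose 2 * Fintype.card (Sym2 α → Fin (m + 1)) := by
    intro S hS
    have h := card_filter_forall_mem (S.offDiag.image Sym2.mk.uncurry)
      ({0} : Finset (Fin (m + 1)))ᶜ
    rw [Sym2.card_image_offDiag, (Finset.mem_filter.mp hS).2, Finset.card_compl,
      Finset.card_singleton, Fintype.card_fin, Nat.add_sub_cancel] at h
    exact h
  refine (Nat.mul_le_mul_right _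
    ((Finset.card_le_card hsub).trans Finset.card_biUnion_le)).trans ?_
  rw [Finset.sum_mul, Finset.sum_congr rfl hcard, Finset.sum_const, smul_eq_mul]
  refine Nat.mul_le_mul_right _ ((Finset.card_filter_le _ _).trans ?_)
  rw [Finset.card_univ, Fintype.card_finset]

theorem two_mul_pow_succ_le (m : ℕ) : 2 * m ^ (m + 1) ≤ (m + 1) ^ (m + 1) := by
  have h : m ^ (m + 1) + (m + 1) * m ^ m ≤ (m + 1) ^ (m + 1) := by
    rw [add_pow, Finset.sum_range_succ, Finset.sum_range_succ]
    simp only [one_pow, mul_one, Nat.choose_self, Nat.cast_one, Nat.choose_succ_self_right]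
    push_cast
    nlinarith [Nat.zero_le (∑ i ∈ Finset.range m, m ^ i * (m + 1).choose i)]
  have h' : m ^ (m + 1) = m * m ^ m := pow_succ' _ _
  nlinarith [Nat.zero_le (m ^ m)]

theorem two_pow_succ_mul_pow_le {m n c : ℕ} (hc : (m + 1) * (n + 1) ≤ c) :
    2 ^ (n + 1) * m ^ c ≤ (m + 1) ^ c := by
  obtain ⟨d, rfl⟩ := Nat.exists_eq_add_of_le hc
  rw [pow_add m, pow_add (m + 1), ← mul_assoc, pow_mul, pow_mul, ← mul_pow]
  exact Nat.mul_le_mul (Nat.pow_le_pow_left (two_mul_pow_succ_le m) _)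
    (Nat.pow_le_pow_left (Nat.le_succ m) _)

open Classical in
/-- Some labelling has few vertices on short cycles and no independent set of size `t`. -/
theorem exists_label_few_shortCycles_no_independent {α : Type*} [Fintype α] {m g D r t : ℕ}
    (hα : Fintype.card α = D * (m + 1)) (hr : 2 * ∑ l ∈ Finset.range g, D ^ (l + 1) < r)
    (ht : (m + 1) * (Fintype.card α + 1) ≤ t.choose 2) :
    ∃ ω : Sym2 α → Fin (m + 1),
      (Finset.univ.filter fun v => v ∈ shortCycleVertices (zeroLabelGraph ω) g).card ≤ r ∧
      ¬ ∃ S : Finset α, S.card = t ∧ ∀ e ∈ S.offDiag.image Sym2.mk.uncurry, ω e ≠ 0 := by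
  set X := fun ω : Sym2 α → Fin (m + 1) =>
    (Finset.univ.filter fun v => v ∈ shortCycleVertices (zeroLabelGraph ω) g).card
  set A := Finset.univ.filter fun ω : Sym2 α → Fin (m + 1) => r < X ω with hA
  set B := Finset.univ.filter fun ω : Sym2 α → Fin (m + 1) =>
    ∃ S : Finset α, S.card = t ∧ ∀ e ∈ S.offDiag.image Sym2.mk.uncurry, ω e ≠ 0 with hB
  have hΩ : 0 < Fintype.card (Sym2 α → Fin (m + 1)) := Fintype.card_pos
  have hXsum : ∑ ω, X ω ≤ _ := sum_card_shortCycleVertices_le m g D hα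
  have hBmul := card_labels_independent_mul_le (α := α) m t
  generalize hN : Fintype.card (Sym2 α → Fin (m + 1)) = N at *
  generalize ∑ l ∈ Finset.range g, D ^ (l + 1) = C at *
  have hAcard : 2 * A.card < N := by
    have h₁ : A.card * r ≤ C * N :=
      calc A.card * r = ∑ _ω ∈ A, r := by rw [Finset.sum_const, smul_eq_mul]
        _ ≤ ∑ ω ∈ A, X ω := Finset.sum_le_sum fun ω hω => (Finset.mem_filter.mp hω).2.le
        _ ≤ ∑ ω, X ω := Finset.sum_le_sum_of_subset (Finset.subset_univ _)
        _ ≤ _ := hXsum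
    by_contra! hcon
    nlinarith [Nat.mul_le_mul_right r hcon, Nat.mul_lt_mul_of_pos_right hr hΩ]
  have hBcard : 2 * B.card ≤ N := by
    refine Nat.le_of_mul_le_mul_right (c := (m + 1) ^ t.choose 2) ?_ (by positivity)
    calc 2 * B.card * (m + 1) ^ t.choose 2
        ≤ 2 * (2 ^ Fintype.card α * (m ^ t.choose 2 * N)) := by
          rw [mul_assoc]; exact Nat.mul_le_mul_left _ hBmul
      _ = 2 ^ (Fintype.card α + 1) * m ^ t.choose 2 * N := by ring
      _ ≤ (m + 1) ^ t.choose 2 * N := Nat.mul_le_mul_right _ (two_pow_succ_mul_pow_le ht)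
      _ = _ := mul_comm _ _
  obtain ⟨ω, hω⟩ : ∃ ω, ω ∉ A ∪ B := by
    by_contra! hcon
    have h := Finset.card_union_le A B
    rw [Finset.eq_univ_iff_forall.mpr hcon, Finset.card_univ, hN] at h
    omega
  simp only [Finset.mem_union, not_or, hA, hB, Finset.mem_filter, Finset.mem_univ, true_and,
    not_lt] at hω
  exact ⟨ω, hω⟩

open Classical in
/-- Deleting the vertices on short cycles leaves a graph of large girth, which is not
`k`-colorable as it has at least `k * t` vertices and no independent set of size `t`. -/
theorem not_colorable_induce_compl_shortCycleVertices {α : Type*} [Fintype α] {m g k t : ℕ}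
    (hk : 0 < k) (hα : Fintype.card α = 2 * (k * t)) {ω : Sym2 α → Fin (m + 1)}
    (hshort : (Finset.univ.filter fun v =>
      v ∈ shortCycleVertices (zeroLabelGraph ω) g).card ≤ k * t)
    (hindep : ¬ ∃ S : Finset α, S.card = t ∧
      ∀ e ∈ S.offDiag.image Sym2.mk.uncurry, ω e ≠ 0) :
    ¬ ((zeroLabelGraph ω).induce (shortCycleVertices (zeroLabelGraph ω) g)ᶜ).Colorable k := by
  rintro ⟨c⟩
  have hUcard : Fintype.card (Fin k) * t ≤
      Fintype.card ((shortCycleVertices (zeroLabelGraph ω) g)ᶜ : Set α) := by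
    have h := Fintype.card_compl_set (shortCycleVertices (zeroLabelGraph ω) g)
    have hX := Fintype.card_subtype fun v => v ∈ shortCycleVertices (zeroLabelGraph ω) g
    rw [Fintype.card_fin]
    rw [hα] at h
    refine le_trans ?_ h.ge
    refine le_trans ?_ (Nat.sub_le_sub_left (hX.le.trans hshort) _)
    omega
  have : Nonempty (Fin k) := ⟨⟨0, hk⟩⟩
  obtain ⟨y, hy⟩ := Fintype.exists_le_card_fiber_of_mul_le_card c hUcard
  obtain ⟨S, hS, hSt⟩ := Finset.exists_subset_card_eq hy
  refine hindep ⟨S.map (Function.Embedding.subtype _), by rw [Finset.card_map, hSt], ?_⟩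
  intro e he h0
  obtain ⟨⟨a, b⟩, hab, rfl⟩ := Finset.mem_image.mp he
  rw [Finset.mem_offDiag] at hab
  obtain ⟨ha, hb, hne⟩ := hab
  obtain ⟨a, haS, rfl⟩ := Finset.mem_map.mp ha
  obtain ⟨b, hbS, rfl⟩ := Finset.mem_map.mp hb
  exact c.valid (v := a) (w := b) ⟨hne, h0⟩
    ((Finset.mem_filter.mp (hS haS)).2.trans (Finset.mem_filter.mp (hS hbS)).2.symm)

/-- A theorem of Erdős: finite graphs of large girth and large chromatic number exist. -/
theorem exists_girth_gt_not_colorable (k g : ℕ) (hk : 0 < k) :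
    ∃ (W : Type) (_ : Fintype W) (G : SimpleGraph W),
      (∀ (v : W) (p : G.Walk v v), p.IsCycle → g < p.length) ∧ ¬ G.Colorable k := by
  classical
  obtain ⟨q, hq⟩ : ∃ q, q = 4 * k + 2 := ⟨_, rfl⟩
  obtain ⟨D, hD⟩ : ∃ D, D = 2 * k * q := ⟨_, rfl⟩
  obtain ⟨m, hm⟩ : ∃ m, m = 2 * ∑ l ∈ Finset.range g, D ^ (l + 1) := ⟨_, rfl⟩
  obtain ⟨t, ht⟩ : ∃ t, t = q * (m + 1) := ⟨_, rfl⟩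
  have hr : 2 * ∑ l ∈ Finset.range g, D ^ (l + 1) < k * t := by
    rw [← hm, ← Nat.succ_le_iff, ht]
    exact (Nat.le_mul_of_pos_left _ (by omega)).trans (Nat.le_mul_of_pos_left _ hk)
  have htc : (m + 1) * (D * (m + 1) + 1) ≤ t.choose 2 := by
    rw [Nat.choose_two_right, Nat.le_div_iff_mul_le two_pos]
    have h : 4 * k * (m + 1) + 1 ≤ t - 1 := by
      refine Nat.le_sub_of_add_le ?_
      rw [ht, hq]
      nlinarith
    calc (m + 1) * (D * (m + 1) + 1) * 2
        = (m + 1) * (q * (4 * k * (m + 1)) + 2) := by rw [hD]; ring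
      _ ≤ (m + 1) * (q * (4 * k * (m + 1) + 1)) :=
          Nat.mul_le_mul_left _ (by rw [Nat.mul_succ q]; omega)
      _ ≤ (m + 1) * (q * (t - 1)) := Nat.mul_le_mul_left _ (Nat.mul_le_mul_left _ h)
      _ = q * (m + 1) * (t - 1) := by ring
      _ = t * (t - 1) := by rw [← ht]
  have hα := Fintype.card_fin (D * (m + 1))
  obtain ⟨ω, hshort, hindep⟩ :=
    exists_label_few_shortCycles_no_independent hα hr (by rwa [hα])
  refine ⟨((shortCycleVertices (zeroLabelGraph ω) g)ᶜ : Set _), inferInstance,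
    (zeroLabelGraph ω).induce _, ?_, not_colorable_induce_compl_shortCycleVertices hk
      (by rw [hα, hD, ht]; ring) hshort hindep⟩
  intro v p hp
  by_contra! hle
  have hv : v.1 ∈ shortCycleVertices (zeroLabelGraph ω) g :=
    ⟨p.map (Embedding.induce _).toHom, hp.map Subtype.val_injective,
      (Walk.length_map _ p).trans_le hle⟩
  exact v.2 hv

theorem stmt15 :
    ∃ (W : ℕ → Type) (_ : ∀ i, Fintype (W i)) (G : ∀ i, SimpleGraph (W i)),
      (∀ i, (G i).CliqueFree 3) ∧
      (∀ i, ((i : ℕ) : ℕ∞) ≤ (G i).chromaticNumber) ∧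
      (∀ ε : ℝ, 0 < ε → ∀ N0 : ℕ, ∃ N : ℕ, N0 ≤ N ∧
        (1 - ε) * (N : ℝ) ≤
          (({n : ℕ | 3 ≤ n ∧ n ≤ N ∧ ∀ i, ¬ ∃ (v : W i) (p : (G i).Walk v v),
              p.IsCycle ∧ IsInducedWalk (G i) p ∧ p.length = n}).ncard : ℝ)) := by
  choose W inst G hG hcol using fun k g => exists_girth_gt_not_colorable (k + 1) g k.succ_pos
  let b : ℕ → ℕ → ℕ := fun i x => x + @Fintype.card _ (inst i x) + 3
  let a : ℕ → ℕ := fun i => Nat.rec 3 (fun i x => (i + 1) * b i x) i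
  have ha : ∀ i, a (i + 1) = (i + 1) * b i (a i) := fun _ => rfl
  have hba : ∀ i, b i (a i) ≤ a (i + 1) := fun i => by
    rw [ha]
    exact Nat.le_mul_of_pos_left _ i.succ_pos
  have hstep : ∀ i, a i + 3 ≤ a (i + 1) := fun i =>
    le_trans (by simp only [b]; omega) (hba i)
  have hmono : Monotone a := monotone_nat_of_le_succ fun i => by have := hstep i; omega
  have hlarge : ∀ i, i ≤ a i := fun i => by
    induction i with
    | zero => exact Nat.zero_le _
    | succ i ih => have := hstep i; omega
  refine ⟨fun i => W i (a i), fun i => inst i (a i), fun i => G i (a i), ?_, ?_, ?_⟩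
  · intro i s hs
    obtain ⟨v, p, hp, hl⟩ :=
      (G i (a i)).is3Clique_iff_exists_cycle_length_three.mp ⟨s, hs⟩
    have h := hG i (a i) v p hp
    have h3 : 3 ≤ a i := hmono (Nat.zero_le i)
    omega
  · intro i
    by_contra! hlt
    exact hcol i (a i)
      ((chromaticNumber_le_iff_colorable.mp hlt.le).mono (Nat.le_succ i))
  · intro ε hε N0
    obtain ⟨j, hj⟩ := exists_nat_gt (1 / ε)
    set i := max j N0 with hi
    refine ⟨a (i + 1), ?_, ?_⟩
    · have := hlarge (i + 1)
      omega
    · have hsub : (↑(Finset.Ioc (b i (a i)) (a (i + 1))) : Set ℕ) ⊆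
          {n : ℕ | 3 ≤ n ∧ n ≤ a (i + 1) ∧
            ∀ i, ¬ ∃ (v : W i (a i)) (p : (G i (a i)).Walk v v),
              p.IsCycle ∧ IsInducedWalk (G i (a i)) p ∧ p.length = n} := by
        intro n hn
        rw [Finset.coe_Ioc, Set.mem_Ioc] at hn
        refine ⟨by have : 3 ≤ b i (a i) := by simp only [b]; omega
                   omega, hn.2, ?_⟩
        rintro l ⟨v, p, hp, -, rfl⟩
        rcases le_or_gt l i with hl | hl
        · have hcard : p.length ≤ @Fintype.card _ (inst l (a l)) := by
            let := inst l (a l)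
            have h := hp.support_nodup.length_le_card
            rwa [List.length_tail, Walk.length_support, Nat.add_sub_cancel] at h
          have hb : @Fintype.card _ (inst l (a l)) ≤ b l (a l) := by simp only [b]; omega
          have hbi : b l (a l) ≤ b i (a i) := by
            rcases hl.eq_or_lt with rfl | hl
            · exact le_rfl
            · have h₁ := hba l
              have h₂ : a (l + 1) ≤ a i := hmono hl
              have h₃ : a i ≤ b i (a i) := by simp only [b]; omega
              omega
          omega
        · have h₁ := hG l (a l) v p hp
          have h₂ : a (i + 1) ≤ a l := hmono hl
          omega
      have hfin : {n : ℕ | 3 ≤ n ∧ n ≤ a (i + 1) ∧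
            ∀ i, ¬ ∃ (v : W i (a i)) (p : (G i (a i)).Walk v v),
              p.IsCycle ∧ IsInducedWalk (G i (a i)) p ∧ p.length = n}.Finite :=
        (Set.finite_Iic (a (i + 1))).subset fun n hn => hn.2.1
      have hcard := Set.ncard_le_ncard hsub hfin
      rw [Set.ncard_coe_finset, Nat.card_Ioc] at hcard
      refine le_trans ?_ (Nat.cast_le.mpr hcard)
      rw [Nat.cast_sub (hba i), ha]
      push_cast
      have hεi : 1 ≤ ε * (i + 1) := by
        have hji : (j : ℝ) ≤ i := by exact_mod_cast le_max_left j N0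
        rw [div_lt_iff₀ hε] at hj
        nlinarith
      nlinarith [mul_le_mul_of_nonneg_right hεi (Nat.cast_nonneg (α := ℝ) (b i (a i)))]
end
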